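/- arXiv:1408.4897 — 9 statements merged into one kernel-verified Lean document; each statement's English description precedes it below -/
import Mathlib

section
/- Let I be an operator ideal with F(H) ⊆ I ⊆ K(H). For a permutation σ of the positive integers, the operator V_σ satisfies V_σ − 1 ∈ I if and only if σ is a finite permutation (i.e., σ(n) = n for all but finitely many n). -/
/-!
If `σ` moves only finitely many indices, then `V - 1` takes finitely many values on the basis. The
span of these values is finite-dimensional, hence closed, so it contains the range of `V - 1`.

Conversely, the diagonal entries of a compact operator tend to zero: by Bessel's inequality
`⟪b i, y⟫ → 0` for each fixed `y`, and the vectors `T (b i)` lie in a compact set, so they can be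
compared with their limit points `y`. The diagonal entry of `V - 1` is `-1` at every index moved
by `σ`.
-/

/-- A (two-sided) operator ideal of `B(H)`, modeled as a set of bounded operators that is a
complex-linear subspace closed under left and right multiplication by arbitrary bounded
operators. -/
def IsOperatorIdeal {H : Type*} [NormedAddCommGroup H] [InnerProductSpace ℂ H]
    (I : Set (H →L[ℂ] H)) : Prop :=
  (0 : H →L[ℂ] H) ∈ I ∧
  (∀ A B : H →L[ℂ] H, A ∈ I → B ∈ I → A + B ∈ I) ∧
  (∀ (c : ℂ) (A : H →L[ℂ] H), A ∈ I → c • A ∈ I) ∧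
  (∀ (T A : H →L[ℂ] H), A ∈ I → T * A ∈ I ∧ A * T ∈ I)

open Filter Topology

section Orthonormal

variable {𝕜 E ι : Type*} [RCLike 𝕜] [SeminormedAddCommGroup E] [InnerProductSpace 𝕜 E] {b : ι → E}

lemma tendsto_inner_cofinite_zero_of_orthonormal (hb : Orthonormal 𝕜 b) (y : E) :
    Tendsto (fun i => inner 𝕜 (b i) y) cofinite (𝓝 0) := by
  have hsq : Tendsto (fun i => ‖inner 𝕜 (b i) y‖ ^ 2) cofinite (𝓝 0) :=
    (hb.inner_products_summable y).tendsto_cofinite_zero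
  exact tendsto_zero_iff_norm_tendsto_zero.2 (by simpa using hsq.sqrt)

lemma tendsto_inner_cofinite_zero_of_mem_isCompact (hb : Orthonormal 𝕜 b) {K : Set E}
    (hK : IsCompact K) {y : ι → E} (hy : ∀ i, y i ∈ K) :
    Tendsto (fun i => inner 𝕜 (b i) (y i)) cofinite (𝓝 0) := by
  refine (tendsto_iff_ultrafilter _ _ _).2 fun g hg => ?_
  obtain ⟨z, -, hz⟩ := hK.ultrafilter_le_nhds (g.map y)
    (tendsto_principal.2 (Eventually.of_forall hy))
  have hdiff : Tendsto (fun i => inner 𝕜 (b i) (y i - z)) g (𝓝 0) :=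
    squeeze_zero_norm (fun i => (norm_inner_le_norm _ _).trans_eq (by rw [hb.1, one_mul]))
      (tendsto_iff_norm_sub_tendsto_zero.1 hz)
  have hlim := (tendsto_inner_cofinite_zero_of_orthonormal hb z).mono_left hg
  simpa only [← inner_add_right, sub_add_cancel, add_zero] using hdiff.add hlim

end Orthonormal

lemma tendsto_inner_apply_cofinite_zero_of_isCompactOperator {𝕜 E F ι : Type*} [RCLike 𝕜]
    [NormedAddCommGroup E] [InnerProductSpace 𝕜 E] [SeminormedAddCommGroup F] [NormedSpace 𝕜 F]
    {b : ι → E} (hb : Orthonormal 𝕜 b) {T : F →ₗ[𝕜] E}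
    (hT : IsCompactOperator T) {x : ι → F} (hx : Bornology.IsBounded (Set.range x)) :
    Tendsto (fun i => inner 𝕜 (b i) (T (x i))) cofinite (𝓝 0) :=
  tendsto_inner_cofinite_zero_of_mem_isCompact hb (hT.isCompact_closure_image_of_bounded hx)
    fun i => subset_closure (Set.mem_image_of_mem T (Set.mem_range_self i))

section FiniteRank

variable {𝕜 F ι : Type*} [NontriviallyNormedField 𝕜] [CompleteSpace 𝕜] [AddCommGroup F]
  [Module 𝕜 F] [TopologicalSpace F] [IsTopologicalAddGroup F] [ContinuousSMul 𝕜 F] [T2Space F]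

lemma finiteDimensional_range_of_dense_span_of_finite_image {E : Type*} [AddCommGroup E]
    [Module 𝕜 E] [TopologicalSpace E] [ContinuousAdd E] [ContinuousConstSMul 𝕜 E]
    {T : E →L[𝕜] F} {s : Set E}
    (hs : (Submodule.span 𝕜 s).topologicalClosure = ⊤) (hTs : (T '' s).Finite) :
    FiniteDimensional 𝕜 (LinearMap.range (T : E →ₗ[𝕜] F)) := by
  let W : Submodule 𝕜 F := Submodule.span 𝕜 (T '' s)
  have : FiniteDimensional 𝕜 W := FiniteDimensional.span_of_finite 𝕜 hTs
  have hspan : Submodule.span 𝕜 s ≤ W.comap (T : E →ₗ[𝕜] F) :=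
    Submodule.span_le.2 fun x hx => Submodule.subset_span (Set.mem_image_of_mem T hx)
  have hclosure : (⊤ : Submodule 𝕜 E) ≤ W.comap (T : E →ₗ[𝕜] F) :=
    hs ▸ Submodule.topologicalClosure_minimal _ hspan
      (W.closed_of_finiteDimensional.preimage T.continuous)
  exact Submodule.finiteDimensional_of_le (LinearMap.range_le_iff_comap.2 (top_unique hclosure))

lemma finiteDimensional_range_sub_one_of_finite_ne {b : ι → F} {f : ι → ι} {V : F →L[𝕜] F}
    (hdense : (Submodule.span 𝕜 (Set.range b)).topologicalClosure = ⊤)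
    (hV : ∀ i, V (b i) = b (f i)) (hf : {i | f i ≠ i}.Finite) :
    FiniteDimensional 𝕜 (LinearMap.range ((V - 1 : F →L[𝕜] F) : F →ₗ[𝕜] F)) := by
  refine finiteDimensional_range_of_dense_span_of_finite_image hdense ?_
  have hsupport : (Function.support fun i => (V - 1) (b i)) ⊆ {i | f i ≠ i} := fun i hi hfi =>
    hi (by simp [hV, hfi])
  rw [← Set.range_comp']
  exact (((hf.subset hsupport).image _).insert 0).subset
    (Function.range_subset_insert_image_support _)

end FiniteRank

section InnerProductSpace

variable {𝕜 H ι : Type*} [RCLike 𝕜] [NormedAddCommGroup H] [InnerProductSpace 𝕜 H] {b : ι → H}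
  {f : ι → ι} {V : H →L[𝕜] H}

lemma finite_ne_of_isCompactOperator_sub_one (hb : Orthonormal 𝕜 b) (hV : ∀ i, V (b i) = b (f i))
    (hc : IsCompactOperator (V - 1 : H →L[𝕜] H)) :
    {i | f i ≠ i}.Finite := by
  have hbounded : Bornology.IsBounded (Set.range b) :=
    isBounded_iff_forall_norm_le.2 ⟨1, Set.forall_mem_range.2 fun i => (hb.1 i).le⟩
  have hlim : Tendsto (fun i => inner 𝕜 (b i) ((V - 1) (b i))) cofinite (𝓝 0) :=
    tendsto_inner_apply_cofinite_zero_of_isCompactOperator hb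
      (T := ((V - 1 : H →L[𝕜] H) : H →ₗ[𝕜] H)) hc hbounded
  have hev : ∀ᶠ i in cofinite, inner 𝕜 (b i) ((V - 1) (b i)) ≠ -1 :=
    hlim.eventually_ne (by simp)
  refine hev.subset fun i hi => not_not.2 ?_
  calc inner 𝕜 (b i) ((V - 1) (b i)) = inner 𝕜 (b i) (b (f i)) - inner 𝕜 (b i) (b i) := by
        simp [hV, inner_sub_right]
    _ = -1 := by rw [hb.2 (Ne.symm hi), inner_self_eq_norm_sq_to_K, hb.1]; simp

theorem permutation_unitary_mem_ideal_iff_finite_perm_general (hb : Orthonormal 𝕜 b)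
    (hdense : (Submodule.span 𝕜 (Set.range b)).topologicalClosure = ⊤) {I : Set (H →L[𝕜] H)}
    (hFI : ∀ T : H →L[𝕜] H,
      FiniteDimensional 𝕜 (LinearMap.range (T : H →ₗ[𝕜] H)) → T ∈ I)
    (hIK : ∀ T ∈ I, IsCompactOperator (T : H →L[𝕜] H)) (hV : ∀ i, V (b i) = b (f i)) :
    V - 1 ∈ I ↔ {i | f i ≠ i}.Finite :=
  ⟨fun h => finite_ne_of_isCompactOperator_sub_one hb hV (hIK _ h),
    fun hf => hFI _ (finiteDimensional_range_sub_one_of_finite_ne hdense hV hf)⟩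

end InnerProductSpace

/-- Let `I` be an operator ideal with `F(H) ⊆ I ⊆ K(H)`. For a permutation
`σ` of the natural numbers, the operator `V_σ` (determined by `V_σ bₙ = b_{σ⁻¹ n}`) satisfies
`V_σ - 1 ∈ I` if and only if `σ` is a finite permutation. -/
theorem permutation_unitary_mem_ideal_iff_finite_perm
    {H : Type*} [NormedAddCommGroup H] [InnerProductSpace ℂ H] [CompleteSpace H]
    (b : HilbertBasis ℕ ℂ H)
    (I : Set (H →L[ℂ] H)) (hI : IsOperatorIdeal I)
    (hFI : ∀ T : H →L[ℂ] H,
      FiniteDimensional ℂ (LinearMap.range (T : H →ₗ[ℂ] H)) → T ∈ I)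
    (hIK : ∀ T ∈ I, IsCompactOperator (T : H →L[ℂ] H))
    (σ : Equiv.Perm ℕ)
    (V : H →L[ℂ] H) (hV : V ∈ unitary (H →L[ℂ] H))
    (hVσ : ∀ n : ℕ, V (b n) = b (σ.symm n)) :
    (V - 1) ∈ I ↔ {n : ℕ | σ n ≠ n}.Finite := by
  have hmoved (n : ℕ) : σ.symm n ≠ n ↔ σ n ≠ n := by rw [ne_comm, ne_eq, Equiv.eq_symm_apply]
  simpa only [hmoved] using
    permutation_unitary_mem_ideal_iff_finite_perm_general b.orthonormal b.dense_span hFI hIK hVσ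
end

section
/- Let I be an operator ideal with F(H) ⊆ I ⊆ K(H), and let X ∈ I be a normal operator. Suppose W₁, W₂ ∈ U_I(H) are such that D₁ := W₁XW₁* and D₂ := W₂XW₂* are both diagonal with respect to the basis b, and suppose the diagonal entries of D₁ are pairwise distinct (i.e., X has spectral multiplicities one). Then there exists a finite permutation σ of the positive integers such that D₂ = V_σ D₁ V_σ⁻¹. -/
/-!
The invertible operator `U = W₂ W₁⁻¹` intertwines the two diagonal operators, `U D₁ = D₂ U`, so
`U` and `U⁻¹` exchange their eigenvectors. An eigenvector of a diagonal operator is supported on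
the basis vectors carrying its eigenvalue; since the entries of `D₁` are distinct, the bijection
`U⁻¹` sends each basis vector to a multiple of a single basis vector. Hence `D₂` has the entries
of `D₁`, permuted by some `σ`, and `⟪b n, U (b n)⟫ = 0` whenever `σ n ≠ n`. But
`U - 1 = (W₂ - W₁) W₁⁻¹` is compact, and the diagonal entries of a compact operator tend to `0`,
so those of `U` vanish only finitely often.
-/

open Filter Topology

section DiagonalOperators

lemma eigenvector_map_of_semiconj {M A B G : Type*} [SMul M A] [SMul M B] [FunLike G A B]
    [MulActionHomClass G M A B] {f : G} {S : A → A} {T : B → B} (hf : Function.Semiconj f S T)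
    {x : A} {μ : M} (hx : S x = μ • x) : T (f x) = μ • f x := by
  rw [← hf, hx, map_smul]

variable {𝕜 E F ι κ : Type*} [RCLike 𝕜] [NormedAddCommGroup E] [InnerProductSpace 𝕜 E]
  [NormedAddCommGroup F] [InnerProductSpace 𝕜 F]

lemma eq_of_forall_inner_hilbertBasis_eq (b : HilbertBasis ι 𝕜 E) {x y : E}
    (h : ∀ i, inner 𝕜 (b i) x = inner 𝕜 (b i) y) : x = y := by
  apply b.repr.injective
  ext i
  simpa only [b.repr_apply_apply] using h i

lemma exists_inner_hilbertBasis_ne_zero (b : HilbertBasis ι 𝕜 E) {x : E} (hx : x ≠ 0) :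
    ∃ i, inner 𝕜 (b i) x ≠ 0 := by
  contrapose! hx
  exact eq_of_forall_inner_hilbertBasis_eq b fun i => by rw [hx, inner_zero_right]

variable {b : HilbertBasis ι 𝕜 E} {T : E →L[𝕜] E} {d : ι → 𝕜}

lemma inner_diagonal_apply (hT : ∀ i, T (b i) = d i • b i) (i : ι) (x : E) :
    inner 𝕜 (b i) (T x) = d i * inner 𝕜 (b i) x := by
  have hdense : Dense (Submodule.span 𝕜 (Set.range b) : Set E) :=
    Submodule.dense_iff_topologicalClosure_eq_top.2 b.dense_span
  have hcomp : (innerSL 𝕜 (b i)).comp T = d i • innerSL 𝕜 (b i) := by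
    refine ContinuousLinearMap.ext_on hdense ?_
    rintro _ ⟨j, rfl⟩
    obtain rfl | hij := eq_or_ne i j
    · simp [hT]
    · simp [hT, b.orthonormal.inner_eq_zero hij]
  exact DFunLike.congr_fun hcomp x

lemma diagonal_entry_eq_of_inner_eigenvector_ne_zero (hT : ∀ i, T (b i) = d i • b i) {x : E} {μ : 𝕜}
    (hx : T x = μ • x) {i : ι} (hi : inner 𝕜 (b i) x ≠ 0) : d i = μ := by
  apply mul_right_cancel₀ hi
  rw [← inner_diagonal_apply hT, hx, inner_smul_right]

lemma eigenvector_eq_inner_smul_of_injective (hT : ∀ i, T (b i) = d i • b i)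
    (hd : Function.Injective d) {x : E} {i : ι} (hx : T x = d i • x) :
    x = inner 𝕜 (b i) x • b i := by
  refine eq_of_forall_inner_hilbertBasis_eq b fun j => ?_
  obtain rfl | hji := eq_or_ne j i
  · simp [inner_smul_right, b.orthonormal.norm_eq_one]
  · have hj : inner 𝕜 (b j) x = 0 := by
      by_contra hj
      exact hji (hd (diagonal_entry_eq_of_inner_eigenvector_ne_zero hT hx hj))
    rw [hj, inner_smul_right, b.orthonormal.inner_eq_zero hji, mul_zero]

lemma exists_equiv_diagonal_entries_of_semiconj {b₁ : HilbertBasis ι 𝕜 E} {b₂ : HilbertBasis κ 𝕜 F}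
    {D₁ : E →L[𝕜] E} {D₂ : F →L[𝕜] F} {d₁ : ι → 𝕜} {d₂ : κ → 𝕜}
    (hD₁ : ∀ i, D₁ (b₁ i) = d₁ i • b₁ i) (hD₂ : ∀ j, D₂ (b₂ j) = d₂ j • b₂ j)
    (hd₁ : Function.Injective d₁) (e : E ≃ₗ[𝕜] F) (he : Function.Semiconj e D₁ D₂) :
    ∃ σ : κ ≃ ι, ∀ j, d₂ j = d₁ (σ j) := by
  have image_ne_zero (i : ι) : e (b₁ i) ≠ 0 := e.map_ne_zero_iff.2 (b₁.orthonormal.ne_zero i)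
  choose τ hτ using fun i => exists_inner_hilbertBasis_ne_zero b₂ (image_ne_zero i)
  have image_eigenvector (i : ι) : D₂ (e (b₁ i)) = d₁ i • e (b₁ i) :=
    eigenvector_map_of_semiconj he (hD₁ i)
  have entry_eq (i : ι) : d₂ (τ i) = d₁ i :=
    diagonal_entry_eq_of_inner_eigenvector_ne_zero hD₂ (image_eigenvector i) (hτ i)
  have τ_injective : Function.Injective τ := fun i i' h => hd₁ (by rw [← entry_eq, h, entry_eq])
  have τ_surjective : Function.Surjective τ := by
    intro j
    have preimage_eigenvector : D₁ (e.symm (b₂ j)) = d₂ j • e.symm (b₂ j) :=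
      eigenvector_map_of_semiconj (he.inverse_left e.left_inv e.right_inv) (hD₂ j)
    obtain ⟨i, hi⟩ := exists_inner_hilbertBasis_ne_zero b₁
      (e.symm.map_ne_zero_iff.2 (b₂.orthonormal.ne_zero j))
    have hij : d₁ i = d₂ j :=
      diagonal_entry_eq_of_inner_eigenvector_ne_zero hD₁ preimage_eigenvector hi
    have basis_eq_smul : b₂ j = inner 𝕜 (b₁ i) (e.symm (b₂ j)) • e (b₁ i) := by
      rw [← map_smul, ← e.symm_apply_eq]
      exact eigenvector_eq_inner_smul_of_injective hD₁ hd₁ (hij ▸ preimage_eigenvector)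
    refine ⟨i, by_contra fun hne => mul_ne_zero hi (hτ i) ?_⟩
    rw [← inner_smul_right, ← basis_eq_smul, b₂.orthonormal.inner_eq_zero hne]
  let τ_equiv := Equiv.ofBijective τ ⟨τ_injective, τ_surjective⟩
  exact ⟨τ_equiv.symm, fun j => (congrArg d₂ (τ_equiv.apply_symm_apply j)).symm.trans (entry_eq _)⟩

end DiagonalOperators

section CompactOperators

variable {𝕜 E F ι : Type*} [RCLike 𝕜] [NormedAddCommGroup E] [InnerProductSpace 𝕜 E]
  [NormedAddCommGroup F] [NormedSpace 𝕜 F]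

lemma tendsto_inner_orthonormal_cofinite {v : ι → E} (hv : Orthonormal 𝕜 v) (x : E) :
    Tendsto (fun i => inner 𝕜 (v i) x) cofinite (𝓝 0) := by
  rw [tendsto_zero_iff_norm_tendsto_zero]
  simpa using (hv.inner_products_summable x).tendsto_cofinite_zero.sqrt

lemma tendsto_inner_compact_apply_cofinite {v : ι → E} (hv : Orthonormal 𝕜 v) {K : F →L[𝕜] E}
    (hK : IsCompactOperator K) {w : ι → F} (hw : Bornology.IsBounded (Set.range w)) :
    Tendsto (fun i => inner 𝕜 (v i) (K (w i))) cofinite (𝓝 0) := by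
  obtain ⟨C, hC, hKC⟩ := hK.image_subset_compact_of_bounded (f := (K : F →ₗ[𝕜] E)) hw
  -- By compactness `K ∘ w` converges in norm along every ultrafilter, while `v` is weakly null.
  refine (tendsto_iff_ultrafilter _ _ _).2 fun g hg => ?_
  have h_mem : ∀ᶠ i in g, K (w i) ∈ C := Eventually.of_forall fun i => hKC ⟨w i, ⟨i, rfl⟩, rfl⟩
  obtain ⟨y, -, hy⟩ := hC.ultrafilter_le_nhds' (g.map (K ∘ w)) h_mem
  have hKw : Tendsto (fun i => K (w i)) g (𝓝 y) := hy
  have h_diff : Tendsto (fun i => inner 𝕜 (v i) (K (w i) - y)) g (𝓝 0) := by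
    refine squeeze_zero_norm (fun i => ?_) (tendsto_iff_norm_sub_tendsto_zero.1 hKw)
    simpa only [hv.norm_eq_one, one_mul] using norm_inner_le_norm (𝕜 := 𝕜) (v i) (K (w i) - y)
  simpa only [← inner_add_right, sub_add_cancel, add_zero] using
    h_diff.add ((tendsto_inner_orthonormal_cofinite hv y).mono_left hg)

lemma eventually_inner_apply_ne_zero_of_isCompactOperator_sub_one {v : ι → E}
    (hv : Orthonormal 𝕜 v) {U : E →L[𝕜] E} (hU : IsCompactOperator ⇑(U - 1)) :
    ∀ᶠ i in cofinite, inner 𝕜 (v i) (U (v i)) ≠ 0 := by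
  have hbounded : Bornology.IsBounded (Set.range v) :=
    isBounded_iff_forall_norm_le.2 ⟨1, by rintro _ ⟨i, rfl⟩; exact (hv.norm_eq_one i).le⟩
  have hlim := tendsto_inner_compact_apply_cofinite hv (K := U - 1) hU hbounded
  filter_upwards [hlim.eventually_ne (neg_ne_zero.2 one_ne_zero).symm] with i hi h0
  apply hi
  simp [inner_sub_right, h0, hv.norm_eq_one]

end CompactOperators

theorem diagonalization_unique_up_to_finite_permutation_general
    {𝕜 H ι : Type*} [RCLike 𝕜] [NormedAddCommGroup H] [InnerProductSpace 𝕜 H]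
    (b : HilbertBasis ι 𝕜 H) (X : H →L[𝕜] H) (W₁ W₂ : (H →L[𝕜] H)ˣ)
    (hW : IsCompactOperator ⇑(W₂ - W₁ : H →L[𝕜] H)) (d₁ d₂ : ι → 𝕜)
    (hD₁ : ∀ i, (W₁ * X * ↑W₁⁻¹ : H →L[𝕜] H) (b i) = d₁ i • b i)
    (hD₂ : ∀ i, (W₂ * X * ↑W₂⁻¹ : H →L[𝕜] H) (b i) = d₂ i • b i)
    (hd₁ : Function.Injective d₁) :
    ∃ σ : Equiv.Perm ι, {i | σ i ≠ i}.Finite ∧ ∀ i, d₂ i = d₁ (σ i) := by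
  let U : (H →L[𝕜] H)ˣ := W₂ * W₁⁻¹
  let e : H ≃ₗ[𝕜] H := (ContinuousLinearEquiv.unitsEquiv 𝕜 H U).toLinearEquiv
  have intertwine : (U * (W₁ * X * ↑W₁⁻¹) : H →L[𝕜] H) = W₂ * X * ↑W₂⁻¹ * U := by
    simp [U, mul_assoc]
  have semiconj : Function.Semiconj e (W₁ * X * ↑W₁⁻¹ : H →L[𝕜] H) (W₂ * X * ↑W₂⁻¹ : H →L[𝕜] H) :=
    DFunLike.congr_fun intertwine
  have factor : (U - 1 : H →L[𝕜] H) = (W₂ - W₁) * ↑W₁⁻¹ := by simp [U, sub_mul]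
  have compact_sub_one : IsCompactOperator ⇑(U - 1 : H →L[𝕜] H) :=
    factor ▸ hW.comp_clm (↑W₁⁻¹ : H →L[𝕜] H)
  obtain ⟨σ, hσ⟩ := exists_equiv_diagonal_entries_of_semiconj hD₁ hD₂ hd₁ e semiconj
  refine ⟨σ, eventually_cofinite.1 ?_, hσ⟩
  filter_upwards [eventually_inner_apply_ne_zero_of_isCompactOperator_sub_one b.orthonormal
    compact_sub_one] with i hi
  apply hd₁
  rw [← hσ]
  exact diagonal_entry_eq_of_inner_eigenvector_ne_zero hD₂
    (eigenvector_map_of_semiconj semiconj (hD₁ i)) hi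

/-- Let `I` be an operator ideal with `F(H) ⊆ I ⊆ K(H)`, and let `X ∈ I` be
normal.  If `W₁, W₂ ∈ U_I(H)` are such that `D₁ := W₁ X W₁*` and `D₂ := W₂ X W₂*` are both
diagonal with respect to the basis `b`, and the diagonal entries of `D₁` are pairwise distinct,
then there is a finite permutation `σ` with `D₂ = V_σ D₁ V_σ⁻¹`, i.e. the diagonal entries of
`D₂` are those of `D₁` permuted by `σ`. -/
theorem diagonalization_unique_up_to_finite_permutation
    {H : Type*} [NormedAddCommGroup H] [InnerProductSpace ℂ H] [CompleteSpace H]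
    (b : HilbertBasis ℕ ℂ H)
    (I : Set (H →L[ℂ] H)) (hI : IsOperatorIdeal I)
    (hFI : ∀ T : H →L[ℂ] H,
      FiniteDimensional ℂ (LinearMap.range (T : H →ₗ[ℂ] H)) → T ∈ I)
    (hIK : ∀ T ∈ I, IsCompactOperator (T : H →L[ℂ] H))
    (X : H →L[ℂ] H) (hX : X ∈ I) (hXnormal : star X * X = X * star X)
    (W₁ W₂ : H →L[ℂ] H)
    (hW₁ : W₁ ∈ unitary (H →L[ℂ] H)) (hW₂ : W₂ ∈ unitary (H →L[ℂ] H))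
    (hW₁I : W₁ - 1 ∈ I) (hW₂I : W₂ - 1 ∈ I)
    (d₁ d₂ : ℕ → ℂ)
    (hD₁ : ∀ n : ℕ, (W₁ * X * star W₁) (b n) = d₁ n • b n)
    (hD₂ : ∀ n : ℕ, (W₂ * X * star W₂) (b n) = d₂ n • b n)
    (hmult : Function.Injective d₁) :
    ∃ σ : Equiv.Perm ℕ, {n : ℕ | σ n ≠ n}.Finite ∧ ∀ n : ℕ, d₂ n = d₁ (σ n) := by
  exact diagonalization_unique_up_to_finite_permutation_general b X (Unitary.toUnits ⟨W₁, hW₁⟩)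
    (Unitary.toUnits ⟨W₂, hW₂⟩) (by simpa using (hIK _ hW₂I).sub (hIK _ hW₁I)) d₁ d₂ hD₁ hD₂ hmult
end

section
/- Let v = {v_n}_{n≥1} and w = {w_n}_{n≥1} be orthonormal bases of H, and suppose there exists δ > 0 such that ‖w_n − α v_m‖ ≥ δ for all n, m ≥ 1 and all α ∈ ℂ with |α| = 1. Let X be a bounded operator with X v_n = λ_n v_n for all n, where the scalars λ_n are pairwise distinct. Then for every unitary W on H with W − 1 compact, the operator WXW⁻¹ is not diagonal with respect to w (i.e., some w_n fails to be an eigenvector of WXW⁻¹). -/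
/-!
Put `e n = W* (w n)`, an orthonormal sequence. If `w n` is an eigenvector of `W X W*`, then `e n`
is an eigenvector of `X`; the eigenvalues `lam k` being distinct, `e n = a • v k` with `‖a‖ = 1`,
and separation gives `δ ≤ ‖w n - e n‖ = ‖(W - 1) (e n)‖`. This can only happen for finitely many
`n`, since `e` converges weakly to `0` and the compact operator `W - 1` turns weak into norm
convergence.
-/

open Filter Topology

section WeakConvergence

variable {𝕜 E F ι : Type*}

lemma tendsto_zero_of_isCompactOperator_of_forall_dual [NontriviallyNormedField 𝕜]
    [SeminormedAddCommGroup E] [NormedSpace 𝕜 E]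
    [AddCommGroup F] [Module 𝕜 F] [TopologicalSpace F] [ContinuousConstSMul 𝕜 F]
    [SeparatingDual 𝕜 F] {K : E →L[𝕜] F} (hK : IsCompactOperator K) {l : Filter ι}
    {x : ι → E} {r : ℝ} (hbound : ∀ i, ‖x i‖ ≤ r)
    (hweak : ∀ f : StrongDual 𝕜 E, Tendsto (fun i => f (x i)) l (𝓝 0)) :
    Tendsto (fun i => K (x i)) l (𝓝 0) := by
  obtain ⟨S, hS, hKS⟩ :=
    IsCompactOperator.image_closedBall_subset_compact (f := (K : E →ₗ[𝕜] F)) hK r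
  have hmem : ∀ i, K (x i) ∈ S := fun i => hKS ⟨x i, mem_closedBall_zero_iff.mpr (hbound i), rfl⟩
  refine hS.tendsto_nhds_of_unique_mapClusterPt (.of_forall hmem) fun y _ hy => ?_
  refine SeparatingDual.eq_zero_of_forall_dual_eq_zero (R := 𝕜) fun f => ?_
  have hfy : MapClusterPt (f y) l fun i => f (K (x i)) :=
    hy.continuousAt_comp f.continuous.continuousAt
  have hfy_nhds : ClusterPt (f y) (𝓝 0) := hfy.clusterPt.mono (hweak (f.comp K))
  exact eq_of_nhds_neBot hfy_nhds

variable [RCLike 𝕜] [NormedAddCommGroup E] [InnerProductSpace 𝕜 E] [CompleteSpace E]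

lemma tendsto_dual_apply_orthonormal {e : ι → E} (he : Orthonormal 𝕜 e) (f : StrongDual 𝕜 E) :
    Tendsto (fun i => f (e i)) cofinite (𝓝 0) := by
  have hsum : Summable fun i => ‖f (e i)‖ ^ 2 := by
    simpa only [norm_inner_symm (e _), InnerProductSpace.toDual_symm_apply] using
      he.inner_products_summable ((InnerProductSpace.toDual 𝕜 E).symm f)
  rw [tendsto_zero_iff_norm_tendsto_zero]
  simpa using hsum.tendsto_cofinite_zero.sqrt

lemma tendsto_isCompactOperator_apply_orthonormal [AddCommGroup F] [Module 𝕜 F]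
    [TopologicalSpace F] [ContinuousConstSMul 𝕜 F] [SeparatingDual 𝕜 F] {K : E →L[𝕜] F}
    (hK : IsCompactOperator K) {e : ι → E} (he : Orthonormal 𝕜 e) :
    Tendsto (fun i => K (e i)) cofinite (𝓝 0) :=
  tendsto_zero_of_isCompactOperator_of_forall_dual hK (fun i => (he.norm_eq_one i).le)
    (tendsto_dual_apply_orthonormal he)

end WeakConvergence

section DiagonalOperator

variable {ι 𝕜 H : Type*} [RCLike 𝕜] [NormedAddCommGroup H] [InnerProductSpace 𝕜 H]
  (v : HilbertBasis ι 𝕜 H) {X : H →L[𝕜] H} {lam : ι → 𝕜}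

lemma repr_diagonal_apply (hX : ∀ k, X (v k) = lam k • v k) (x : H) (k : ι) :
    v.repr (X x) k = lam k * v.repr x k := by
  have hsum : HasSum (fun j => inner 𝕜 (v k) (X (v.repr x j • v j))) (inner 𝕜 (v k) (X x)) :=
    (v.hasSum_repr x).mapL ((innerSL 𝕜 (v k)).comp X)
  have hoff : ∀ j ≠ k, inner 𝕜 (v k) (X (v.repr x j • v j)) = 0 := fun j hj => by
    simp [hX, inner_smul_right, v.orthonormal.inner_eq_zero hj.symm]
  calc v.repr (X x) k = inner 𝕜 (v k) (X x) := v.repr_apply_apply _ _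
    _ = inner 𝕜 (v k) (X (v.repr x k • v k)) := hsum.unique (hasSum_single k hoff)
    _ = lam k * v.repr x k := by
      simp [hX, inner_smul_right, inner_self_eq_norm_sq_to_K, v.orthonormal.norm_eq_one, mul_comm]

lemma exists_eq_smul_of_diagonal_apply_eq_smul (hX : ∀ k, X (v k) = lam k • v k)
    (hlam : Function.Injective lam) {x : H} (hx : x ≠ 0) {c : 𝕜} (hc : X x = c • x) :
    ∃ (k : ι) (a : 𝕜), x = a • v k := by
  have hcoord : ∀ j, v.repr x j ≠ 0 → lam j = c := by
    intro j hj
    have h : lam j * v.repr x j = c * v.repr x j := by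
      rw [← repr_diagonal_apply v hX, hc, map_smul, lp.coeFn_smul, Pi.smul_apply, smul_eq_mul]
    exact mul_right_cancel₀ hj h
  obtain ⟨k, hk⟩ : ∃ k, v.repr x k ≠ 0 := by
    by_contra! hzero
    exact hx (v.repr.map_eq_zero_iff.mp (lp.ext (funext hzero)))
  refine ⟨k, v.repr x k, (v.hasSum_repr x).unique (hasSum_single k fun j hjk => ?_)⟩
  have hj : v.repr x j = 0 := by
    by_contra hj
    exact hjk (hlam ((hcoord j hj).trans (hcoord k hk).symm))
  rw [hj, zero_smul]

end DiagonalOperator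

section Conjugation

variable {𝕜 H : Type*} [RCLike 𝕜] [NormedAddCommGroup H] [InnerProductSpace 𝕜 H]
  [CompleteSpace H] {W : H →L[𝕜] H}

lemma apply_star_apply_of_mem_unitary (hW : W ∈ unitary (H →L[𝕜] H)) (x : H) :
    W (star W x) = x :=
  DFunLike.congr_fun (Unitary.mul_star_self_of_mem hW) x

lemma apply_star_eq_smul_of_conj_apply_eq_smul (hW : W ∈ unitary (H →L[𝕜] H)) {X : H →L[𝕜] H}
    {x : H} {c : 𝕜} (hx : (W * X * star W) x = c • x) :
    X (star W x) = c • star W x :=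
  calc X (star W x) = (star W * W) (X (star W x)) := by
        rw [Unitary.star_mul_self_of_mem hW, one_apply_eq_self]
    _ = star W ((W * X * star W) x) := rfl
    _ = c • star W x := by rw [hx, map_smul]

lemma orthonormal_star_apply {κ : Type*} {w : κ → H} (hw : Orthonormal 𝕜 w)
    (hW : W ∈ unitary (H →L[𝕜] H)) : Orthonormal 𝕜 fun n => star W (w n) :=
  hw.comp_linearIsometryEquiv (Unitary.linearIsometryEquiv ⟨star W, Unitary.star_mem hW⟩)

lemma le_norm_sub_one_apply_star {ι : Type*} {v : HilbertBasis ι 𝕜 H} {X : H →L[𝕜] H}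
    {lam : ι → 𝕜} (hX : ∀ k, X (v k) = lam k • v k) (hlam : Function.Injective lam)
    (hW : W ∈ unitary (H →L[𝕜] H)) {x : H} (hx : ‖x‖ = 1) {δ : ℝ}
    (hsep : ∀ (k : ι) (a : 𝕜), ‖a‖ = 1 → δ ≤ ‖x - a • v k‖) {c : 𝕜}
    (hc : (W * X * star W) x = c • x) : δ ≤ ‖(W - 1) (star W x)‖ := by
  have hnorm : ‖star W x‖ = 1 := by
    rw [ContinuousLinearMap.norm_map_of_mem_unitary (Unitary.star_mem hW), hx]
  obtain ⟨k, a, hka⟩ : ∃ (k : ι) (a : 𝕜), star W x = a • v k :=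
    exists_eq_smul_of_diagonal_apply_eq_smul v hX hlam (norm_ne_zero_iff.mp (by simp [hnorm]))
      (apply_star_eq_smul_of_conj_apply_eq_smul hW hc)
  have ha : ‖a‖ = 1 := by
    rwa [hka, norm_smul, v.orthonormal.norm_eq_one, mul_one] at hnorm
  calc δ ≤ ‖x - a • v k‖ := hsep k a ha
    _ = ‖(W - 1) (star W x)‖ := by
      rw [sub_apply, one_apply_eq_self, apply_star_apply_of_mem_unitary hW, hka]

end Conjugation

theorem not_diagonal_wrt_separated_basis_general
    {ι κ 𝕜 H : Type*} [RCLike 𝕜] [NormedAddCommGroup H] [InnerProductSpace 𝕜 H]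
    [CompleteSpace H] (v : HilbertBasis ι 𝕜 H) {w : κ → H} (hw : Orthonormal 𝕜 w)
    {δ : ℝ} (hδ : 0 < δ)
    (hsep : ∀ (n : κ) (m : ι) (α : 𝕜), ‖α‖ = 1 → δ ≤ ‖w n - α • v m‖)
    {X : H →L[𝕜] H} {lam : ι → 𝕜} (hX : ∀ m, X (v m) = lam m • v m)
    (hlam : Function.Injective lam) {W : H →L[𝕜] H} (hW : W ∈ unitary (H →L[𝕜] H))
    (hWcompact : IsCompactOperator (W - 1 : H →L[𝕜] H)) :
    {n | ∃ c : 𝕜, (W * X * star W) (w n) = c • w n}.Finite := by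
  have hlim : Tendsto (fun n => (W - 1) (star W (w n))) cofinite (𝓝 0) :=
    tendsto_isCompactOperator_apply_orthonormal hWcompact (orthonormal_star_apply hw hW)
  have hsmall : ∀ᶠ n in cofinite, ‖(W - 1) (star W (w n))‖ < δ :=
    hlim.norm.eventually_lt_const (by rwa [norm_zero])
  refine (eventually_cofinite.mp hsmall).subset ?_
  rintro n ⟨c, hc⟩
  exact not_lt.mpr (le_norm_sub_one_apply_star hX hlam hW (hw.norm_eq_one n) (hsep n) hc)

/-- Let `v` and `w` be orthonormal bases of `H` such that for some `δ > 0`,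
`‖wₙ - α • vₘ‖ ≥ δ` for all `n, m` and all unimodular `α ∈ ℂ`.  Let `X` be a bounded operator
with `X vₙ = λₙ • vₙ`, the `λₙ` pairwise distinct.  Then for every unitary `W` with `W - 1`
compact, the operator `W X W⁻¹ = W X W*` is not diagonal with respect to `w`. -/
theorem not_diagonal_wrt_separated_basis
    {H : Type*} [NormedAddCommGroup H] [InnerProductSpace ℂ H] [CompleteSpace H]
    (v w : HilbertBasis ℕ ℂ H)
    (δ : ℝ) (hδ : 0 < δ)
    (hsep : ∀ (n m : ℕ) (α : ℂ), ‖α‖ = 1 → δ ≤ ‖w n - α • v m‖)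
    (X : H →L[ℂ] H) (lam : ℕ → ℂ)
    (hX : ∀ n : ℕ, X (v n) = lam n • v n)
    (hlam : Function.Injective lam)
    (W : H →L[ℂ] H) (hW : W ∈ unitary (H →L[ℂ] H))
    (hWcompact : IsCompactOperator ((W - 1 : H →L[ℂ] H) : H → H)) :
    ¬ ∀ n : ℕ, ∃ c : ℂ, (W * X * star W) (w n) = c • w n := by
  intro hdiag
  have hfinite := not_diagonal_wrt_separated_basis_general v w.orthonormal hδ hsep hX hlam hW
    hWcompact
  exact Set.infinite_univ (hfinite.subset fun n _ => hdiag n)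
end

section
/- Fix an orthonormal basis b = {b_n}_{n≥1} of H. There exists a family of vectors {v^{(t)}_n : n ≥ 1, 0 ≤ t < π/2} such that: (i) for every t ∈ [0, π/2) the family v^{(t)} = {v^{(t)}_n}_{n≥1} is an orthonormal basis of H, with v^{(0)} = b; and (ii) whenever s ≠ t in [0, π/2), there exists δ > 0 such that ‖v^{(t)}_n − α v^{(s)}_m‖ ≥ δ for all n, m ≥ 1 and all α ∈ ℂ with |α| = 1. -/
/-!
Group the basis vectors into pairs and rotate each of the planes they span by the angle `t`. This
is an action of the additive group `ℝ` on families: rotation by `-t` recovers the original span, and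
the family at angle `t` is the family at angle `s` rotated further by `t - s`. Hence the inner
products between the two families are `0`, `cos (t - s)` or `± sin (t - s)`, which stay away from
modulus `1` unless `t - s` is a multiple of `π / 2`, and two unit vectors are close up to a
unimodular factor only if their inner product has modulus close to `1`.
-/

open Set

lemma norm_sq_sub_norm_inner_le {𝕜 E : Type*} [RCLike 𝕜] [SeminormedAddCommGroup E]
    [InnerProductSpace 𝕜 E] (x y : E) :
    ‖x‖ ^ 2 - ‖inner 𝕜 x y‖ ≤ ‖x‖ * ‖x - y‖ :=
  calc ‖x‖ ^ 2 - ‖inner 𝕜 x y‖ = ‖inner 𝕜 x x‖ - ‖inner 𝕜 x y‖ := by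
        simp
    _ ≤ ‖inner 𝕜 x (x - y)‖ := by
        rw [inner_sub_right]
        exact norm_sub_norm_le _ _
    _ ≤ ‖x‖ * ‖x - y‖ := norm_inner_le_norm x (x - y)

section RotatePairs

variable (𝕜 : Type*) [RCLike 𝕜] {κ E : Type*}

section Module

variable [AddCommGroup E] [Module 𝕜 E]

/-- Rotation by the angle `t` of each pair `b (inl k)`, `b (inr k)` of a family `b`. A family whose
index set is split into pairs is encoded as a family on `κ ⊕ κ`, the two summands giving the first
and second members of the pairs. -/
noncomputable def rotatePairs (t : ℝ) (b : κ ⊕ κ → E) : κ ⊕ κ → E :=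
  Sum.elim (fun k => (Real.cos t : 𝕜) • b (.inl k) + (Real.sin t : 𝕜) • b (.inr k))
    (fun k => (Real.cos t : 𝕜) • b (.inr k) - (Real.sin t : 𝕜) • b (.inl k))

@[simp]
lemma rotatePairs_inl (t : ℝ) (b : κ ⊕ κ → E) (k : κ) :
    rotatePairs 𝕜 t b (.inl k) =
      (Real.cos t : 𝕜) • b (.inl k) + (Real.sin t : 𝕜) • b (.inr k) :=
  rfl

@[simp]
lemma rotatePairs_inr (t : ℝ) (b : κ ⊕ κ → E) (k : κ) :
    rotatePairs 𝕜 t b (.inr k) =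
      (Real.cos t : 𝕜) • b (.inr k) - (Real.sin t : 𝕜) • b (.inl k) :=
  rfl

@[simp]
lemma rotatePairs_zero (b : κ ⊕ κ → E) : rotatePairs 𝕜 0 b = b := by
  ext (k | k) <;> simp

lemma rotatePairs_add (s t : ℝ) (b : κ ⊕ κ → E) :
    rotatePairs 𝕜 (s + t) b = rotatePairs 𝕜 s (rotatePairs 𝕜 t b) := by
  ext (k | k) <;>
    simp only [rotatePairs_inl, rotatePairs_inr, Real.cos_add, Real.sin_add] <;>
    push_cast <;> module

lemma span_range_rotatePairs_le (t : ℝ) (b : κ ⊕ κ → E) :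
    Submodule.span 𝕜 (range (rotatePairs 𝕜 t b)) ≤ Submodule.span 𝕜 (range b) := by
  have smul_mem (c : 𝕜) (i : κ ⊕ κ) : c • b i ∈ Submodule.span 𝕜 (range b) :=
    Submodule.smul_mem _ c (Submodule.subset_span (mem_range_self i))
  rw [Submodule.span_le]
  rintro _ ⟨k | k, rfl⟩
  · exact Submodule.add_mem _ (smul_mem _ _) (smul_mem _ _)
  · exact Submodule.sub_mem _ (smul_mem _ _) (smul_mem _ _)

lemma span_range_rotatePairs (t : ℝ) (b : κ ⊕ κ → E) :
    Submodule.span 𝕜 (range (rotatePairs 𝕜 t b)) = Submodule.span 𝕜 (range b) := by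
  refine le_antisymm (span_range_rotatePairs_le 𝕜 t b) ?_
  simpa only [← rotatePairs_add, neg_add_cancel, rotatePairs_zero] using
    span_range_rotatePairs_le 𝕜 (-t) (rotatePairs 𝕜 t b)

end Module

variable {𝕜} [SeminormedAddCommGroup E] [InnerProductSpace 𝕜 E] {b : κ ⊕ κ → E}

lemma orthonormal_rotatePairs (hb : Orthonormal 𝕜 b) (t : ℝ) :
    Orthonormal 𝕜 (rotatePairs 𝕜 t b) := by
  classical
  have cos_sq_add_sin_sq : (Real.cos t : 𝕜) ^ 2 + (Real.sin t : 𝕜) ^ 2 = 1 := by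
    exact_mod_cast congrArg (RCLike.ofReal (K := 𝕜)) (Real.cos_sq_add_sin_sq t)
  have inner_eq := orthonormal_iff_ite.mp hb
  rw [orthonormal_iff_ite]
  rintro (k | k) (l | l) <;> by_cases hkl : k = l <;>
    simp only [rotatePairs_inl, rotatePairs_inr, inner_add_left, inner_add_right, inner_sub_left,
      inner_sub_right, inner_smul_left, inner_smul_right, RCLike.conj_ofReal, inner_eq,
      Sum.inl.injEq, Sum.inr.injEq, reduceCtorEq, hkl, if_true, if_false] <;>
    grind

lemma norm_inner_rotatePairs_le (hb : Orthonormal 𝕜 b) (t : ℝ) (i j : κ ⊕ κ) :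
    ‖inner 𝕜 (rotatePairs 𝕜 t b i) (b j)‖ ≤ max |Real.cos t| |Real.sin t| := by
  classical
  have inner_eq := orthonormal_iff_ite.mp hb
  rcases i with k | k <;> rcases j with l | l <;> by_cases hkl : k = l <;>
    simp [inner_add_left, inner_sub_left, inner_smul_left, inner_eq, hkl,
      -inner_self_eq_norm_sq_to_K]

lemma norm_inner_rotatePairs_rotatePairs_le (hb : Orthonormal 𝕜 b) (s t : ℝ) (i j : κ ⊕ κ) :
    ‖inner 𝕜 (rotatePairs 𝕜 t b i) (rotatePairs 𝕜 s b j)‖ ≤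
      max |Real.cos (t - s)| |Real.sin (t - s)| := by
  simpa only [← rotatePairs_add, sub_add_cancel] using
    norm_inner_rotatePairs_le (orthonormal_rotatePairs hb s) (t - s) i j

lemma one_sub_max_le_norm_rotatePairs_sub_smul (hb : Orthonormal 𝕜 b) (s t : ℝ) (i j : κ ⊕ κ)
    {α : 𝕜} (hα : ‖α‖ = 1) :
    1 - max |Real.cos (t - s)| |Real.sin (t - s)| ≤
      ‖rotatePairs 𝕜 t b i - α • rotatePairs 𝕜 s b j‖ := by
  have inner_le := norm_inner_rotatePairs_rotatePairs_le hb s t i j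
  have le_norm_sub :=
    norm_sq_sub_norm_inner_le (𝕜 := 𝕜) (rotatePairs 𝕜 t b i) (α • rotatePairs 𝕜 s b j)
  rw [inner_smul_right, norm_mul, hα, (orthonormal_rotatePairs hb t).1 i] at le_norm_sub
  linarith

end RotatePairs

lemma max_abs_cos_abs_sin_lt_one {x : ℝ} (hx : Real.sin (2 * x) ≠ 0) :
    max |Real.cos x| |Real.sin x| < 1 := by
  rw [Real.sin_two_mul] at hx
  have sin_ne_zero : Real.sin x ≠ 0 := fun h => hx (by simp [h])
  have cos_ne_zero : Real.cos x ≠ 0 := fun h => hx (by simp [h])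
  rw [max_lt_iff, ← sq_lt_one_iff_abs_lt_one, ← sq_lt_one_iff_abs_lt_one]
  constructor
  · rw [Real.cos_sq']
    exact sub_lt_self 1 (sq_pos_of_ne_zero sin_ne_zero)
  · rw [Real.sin_sq]
    exact sub_lt_self 1 (sq_pos_of_ne_zero cos_ne_zero)

lemma sin_two_mul_sub_ne_zero {s t : ℝ} (hs : s ∈ Ico 0 (Real.pi / 2))
    (ht : t ∈ Ico 0 (Real.pi / 2)) (hst : s ≠ t) : Real.sin (2 * (t - s)) ≠ 0 := by
  rw [Ne, Real.sin_eq_zero_iff_of_lt_of_lt (by linarith [hs.2, ht.1]) (by linarith [hs.1, ht.2])]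
  exact mul_ne_zero two_ne_zero (sub_ne_zero.mpr hst.symm)

theorem exists_uncountable_family_of_uniformly_separated_orthonormal_bases_general
    {𝕜 E ι κ : Type*} [RCLike 𝕜] [SeminormedAddCommGroup E] [InnerProductSpace 𝕜 E]
    (e : κ ⊕ κ ≃ ι) {b : ι → E} (hb : Orthonormal 𝕜 b) :
    ∃ v : ℝ → ι → E,
      (∀ t, Orthonormal 𝕜 (v t) ∧
        Submodule.span 𝕜 (range (v t)) = Submodule.span 𝕜 (range b)) ∧
      (∀ i, v 0 i = b i) ∧
      (∀ s t, Real.sin (2 * (t - s)) ≠ 0 →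
        ∃ δ > (0 : ℝ), ∀ (i j : ι) (α : 𝕜), ‖α‖ = 1 → δ ≤ ‖v t i - α • v s j‖) := by
  have hbe : Orthonormal 𝕜 (b ∘ e) := hb.comp e e.injective
  refine ⟨fun t => rotatePairs 𝕜 t (b ∘ e) ∘ e.symm, fun t => ⟨?_, ?_⟩, ?_, fun s t hst => ?_⟩
  · exact (orthonormal_rotatePairs hbe t).comp e.symm e.symm.injective
  · rw [e.symm.surjective.range_comp, span_range_rotatePairs, e.surjective.range_comp]
  · simp
  · exact ⟨_, sub_pos.mpr (max_abs_cos_abs_sin_lt_one hst), fun i j α hα =>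
      one_sub_max_le_norm_rotatePairs_sub_smul hbe s t (e.symm i) (e.symm j) hα⟩

/-- Fix an orthonormal basis `b = {bₙ}` of `H`.  There exists a family of
vectors `{v^(t)ₙ : n ≥ 1, 0 ≤ t < π/2}` such that (i) for every `t ∈ [0, π/2)` the family
`v^(t)` is an orthonormal basis of `H`, with `v^(0) = b`; and (ii) whenever `s ≠ t` in
`[0, π/2)` there exists `δ > 0` with `‖v^(t)ₙ - α • v^(s)ₘ‖ ≥ δ` for all `n, m` and all
unimodular `α ∈ ℂ`. -/
theorem exists_uncountable_family_of_uniformly_separated_orthonormal_bases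
    {H : Type*} [NormedAddCommGroup H] [InnerProductSpace ℂ H] [CompleteSpace H]
    (b : HilbertBasis ℕ ℂ H) :
    ∃ v : ℝ → ℕ → H,
      (∀ t ∈ Ico (0 : ℝ) (Real.pi / 2),
        Orthonormal ℂ (v t) ∧
          (Submodule.span ℂ (Set.range (v t))).topologicalClosure = ⊤) ∧
      (∀ n : ℕ, v 0 n = b n) ∧
      (∀ s ∈ Ico (0 : ℝ) (Real.pi / 2), ∀ t ∈ Ico (0 : ℝ) (Real.pi / 2), s ≠ t →
        ∃ δ > (0 : ℝ), ∀ (n m : ℕ) (α : ℂ), ‖α‖ = 1 → δ ≤ ‖v t n - α • v s m‖) := by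
  obtain ⟨v, hv, hv_zero, hv_separated⟩ :=
    exists_uncountable_family_of_uniformly_separated_orthonormal_bases_general
      Equiv.natSumNatEquivNat b.orthonormal
  exact ⟨v, fun t _ => ⟨(hv t).1, (hv t).2 ▸ b.dense_span⟩, hv_zero,
    fun s hs t ht hst => hv_separated s t (sin_two_mul_sub_ne_zero hs ht hst)⟩
end

section
/- Let I be an operator ideal with F(H) ⊊ I ⊆ K(H) (so I contains an operator of infinite rank). Then there exists a self-adjoint operator X ∈ I that is not U_I(H)-diagonalizable with respect to the basis b; that is, there is no W ∈ U_I(H) and no self-adjoint D ∈ 𝒟 ∩ I with X = WDW*. In particular, 𝒟_I^{sa} is a proper subset of I^{sa}. -/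
/-!
A compact operator maps an orthonormal family to vectors tending to zero. So if `W - 1` is compact
and `W D W*` is diagonalized by the vectors `W (u k)`, then some `u k` lies as close as we like to
an eigenvector of `W D W*`. It therefore suffices to find a self-adjoint `X ∈ I` none of whose
eigenvectors is close to any vector of some infinite part of the family.

Split an infinite part of the family into pairs `(x n, y n)`. An eigenvector of a self-adjoint
operator is orthogonal to its range or to its kernel. If `x n + y n` is always in the range of `X`
and `x n - y n` always in its kernel, every eigenvector is thus orthogonal to `x n + y n` or to
`x n - y n`; since both have inner product `1` with `x n`, it has distance at least `1 / 2` from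
`x n`.

To build `X` from an infinite-rank `T ∈ I`, choose an orthonormal sequence `e` along which `T` has
nonzero, pairwise orthogonal values, let `R` send `x n` and `y n` to `e n`, and put
`X = (T R)* (T R)`. Then `X (x n - y n) = 0` and `X (x n) = ‖T (e n)‖² (x n + y n)`.
-/

open Filter Topology
open scoped InnerProductSpace InnerProduct

section

variable {𝕜 E F H ι : Type*} [RCLike 𝕜]
  [NormedAddCommGroup E] [InnerProductSpace 𝕜 E]
  [NormedAddCommGroup F] [InnerProductSpace 𝕜 F]
  [NormedAddCommGroup H] [InnerProductSpace 𝕜 H]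

section Compact

variable [CompleteSpace E] {u : ι → E}

lemma tendsto_dual_comp_orthonormal (hu : Orthonormal 𝕜 u) (g : StrongDual 𝕜 E) :
    Tendsto (g ∘ u) cofinite (𝓝 0) := by
  have hsq := (hu.inner_products_summable
    ((InnerProductSpace.toDual 𝕜 E).symm g)).tendsto_cofinite_zero.sqrt
  rw [tendsto_zero_iff_norm_tendsto_zero]
  simpa [norm_inner_symm (u _)] using hsq

lemma tendsto_compactOperator_comp_orthonormal {G : Type*} [NormedAddCommGroup G]
    [NormedSpace 𝕜 G] (hu : Orthonormal 𝕜 u) {K : E →L[𝕜] G} (hK : IsCompactOperator K) :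
    Tendsto (K ∘ u) cofinite (𝓝 0) := by
  obtain ⟨C, hC, hKC⟩ := hK.image_closedBall_subset_compact (f := (K : E →ₗ[𝕜] G)) 1
  have hmem (i : ι) : K (u i) ∈ C := hKC ⟨u i, by simp [hu.1 i], rfl⟩
  refine hC.tendsto_nhds_of_unique_mapClusterPt (.of_forall hmem) fun y _ hy => ?_
  refine SeparatingDual.eq_zero_of_forall_dual_eq_zero (R := 𝕜) fun g => ?_
  have hgy : MapClusterPt (g y) cofinite ((g ∘L K) ∘ u) := hy.continuousAt_comp (by fun_prop)
  exact eq_of_nhds_neBot (hgy.neBot.mono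
    (inf_le_inf_left _ (tendsto_dual_comp_orthonormal hu (g ∘L K))))

end Compact

section InfiniteRank

lemma exists_norm_eq_one_mem_orthogonal_apply_ne_zero {G : Type*} [AddCommGroup G] [Module 𝕜 G]
    {T : E →ₗ[𝕜] G} (hT : ¬ FiniteDimensional 𝕜 T.range) (M : Submodule 𝕜 E)
    [FiniteDimensional 𝕜 M] : ∃ x ∈ Mᗮ, ‖x‖ = 1 ∧ T x ≠ 0 := by
  obtain ⟨x, hxM, hTx⟩ : ∃ x ∈ Mᗮ, T x ≠ 0 := by
    by_contra! hzero
    have hrange : T.range ≤ M.map T := by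
      rintro _ ⟨x, rfl⟩
      obtain ⟨m, hm, m', hm', rfl⟩ := M.exists_add_mem_mem_orthogonal x
      exact ⟨m, hm, by simp [hzero m' hm']⟩
    exact hT (Submodule.finiteDimensional_of_le hrange)
  have hx : x ≠ 0 := by rintro rfl; simp at hTx
  exact ⟨((‖x‖⁻¹ : ℝ) : 𝕜) • x, Mᗮ.smul_mem _ hxM, by simp [norm_smul, hx], by simp [hx, hTx]⟩

lemma exists_orthonormal_seq_orthogonal_apply_ne_zero [CompleteSpace E] [CompleteSpace F]
    {T : E →L[𝕜] F} (hT : ¬ FiniteDimensional 𝕜 (T : E →ₗ[𝕜] F).range) :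
    ∃ e : ℕ → E, Orthonormal 𝕜 e ∧ (∀ n, T (e n) ≠ 0) ∧
      Pairwise fun m n => ⟪T (e m), T (e n)⟫_𝕜 = 0 := by
  let r (x y : E) : Prop := ⟪x, y⟫_𝕜 = 0 ∧ ⟪T x, T y⟫_𝕜 = 0
  have : Std.Symm r := ⟨fun _ _ h => h.imp inner_eq_zero_symm.1 inner_eq_zero_symm.1⟩
  obtain ⟨e, he, hr⟩ := exists_seq_of_forall_finset_exists' (fun x => ‖x‖ = 1 ∧ T x ≠ 0) r
    fun s _ => by
      let S : Set E := s ∪ (T† ∘L T) '' s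
      have : FiniteDimensional 𝕜 (Submodule.span 𝕜 S) :=
        .span_of_finite 𝕜 (s.finite_toSet.union (s.finite_toSet.image _))
      obtain ⟨y, hy, hy1, hTy⟩ :=
        exists_norm_eq_one_mem_orthogonal_apply_ne_zero hT (Submodule.span 𝕜 S)
      have horth {z : E} (hz : z ∈ S) : ⟪z, y⟫_𝕜 = 0 := hy z (Submodule.subset_span hz)
      refine ⟨y, ⟨hy1, hTy⟩, fun x hx => ⟨horth (.inl hx), ?_⟩⟩
      simpa [ContinuousLinearMap.adjoint_inner_left] using horth (.inr ⟨x, hx, rfl⟩)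
  exact ⟨e, ⟨fun n => (he n).1, fun _ _ h => (hr h).1⟩, fun n => (he n).2, fun _ _ h => (hr h).2⟩

end InfiniteRank

section PartialIsometry

variable [CompleteSpace E] [CompleteSpace F] {a : ι → E} {e : ι → F}

/-- The partial isometry that sends an orthonormal family `a` to an orthonormal family `e` and
vanishes on the orthogonal complement of `a`; it factors through `ℓ²(ι)`. -/
noncomputable def orthonormalPartialIsometry (ha : Orthonormal 𝕜 a) (he : Orthonormal 𝕜 e) :
    E →L[𝕜] F :=
  he.orthogonalFamily.linearIsometry.toContinuousLinearMap ∘L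
    ha.orthogonalFamily.linearIsometry.toContinuousLinearMap†

variable (ha : Orthonormal 𝕜 a) (he : Orthonormal 𝕜 e)

lemma adjoint_orthonormalPartialIsometry :
    (orthonormalPartialIsometry ha he)† = orthonormalPartialIsometry he ha := by
  simp [orthonormalPartialIsometry, ContinuousLinearMap.adjoint_comp]

lemma hasSum_orthonormalPartialIsometry (x : E) :
    HasSum (fun i => ⟪a i, x⟫_𝕜 • e i) (orthonormalPartialIsometry ha he x) := by
  classical
  let V := ha.orthogonalFamily.linearIsometry.toContinuousLinearMap
  have hcoord (i : ι) : ((V†) x) i = ⟪a i, x⟫_𝕜 := by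
    have hV : V (lp.single 2 i 1) = a i :=
      (ha.orthogonalFamily.linearIsometry_apply_single _).trans (by simp)
    rw [← hV, ← ContinuousLinearMap.adjoint_inner_right, lp.inner_single_left]
    simp
  simpa [orthonormalPartialIsometry, V, hcoord] using
    he.orthogonalFamily.hasSum_linearIsometry ((V†) x)

lemma orthonormalPartialIsometry_apply_eq_inner_smul {x : E} {i : ι}
    (hx : ∀ j ≠ i, ⟪a j, x⟫_𝕜 = 0) :
    orthonormalPartialIsometry ha he x = ⟪a i, x⟫_𝕜 • e i :=
  (hasSum_orthonormalPartialIsometry ha he x).unique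
    (hasSum_single i fun j hj => by rw [hx j hj, zero_smul])

lemma orthonormalPartialIsometry_apply_self (i : ι) :
    orthonormalPartialIsometry ha he (a i) = e i := by
  rw [orthonormalPartialIsometry_apply_eq_inner_smul ha he fun _ hj => ha.2 hj,
    inner_self_eq_norm_sq_to_K, ha.1 i]
  simp

lemma orthonormalPartialIsometry_apply_eq_zero {x : E} (hx : ∀ i, ⟪a i, x⟫_𝕜 = 0) :
    orthonormalPartialIsometry ha he x = 0 :=
  (hasSum_orthonormalPartialIsometry ha he x).unique (by simp [hx, hasSum_zero])

end PartialIsometry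

lemma exists_comp_add_mem_range_sub_mem_ker [CompleteSpace E] [CompleteSpace F] [CompleteSpace H]
    {T : E →L[𝕜] F} (hT : ¬ FiniteDimensional 𝕜 (T : E →ₗ[𝕜] F).range)
    {u : ℕ ⊕ ℕ → H} (hu : Orthonormal 𝕜 u) :
    ∃ R : H →L[𝕜] E, ∀ n,
      u (.inl n) + u (.inr n) ∈ ((T ∘L R)† ∘L (T ∘L R)).range ∧
      u (.inl n) - u (.inr n) ∈ ((T ∘L R)† ∘L (T ∘L R)).ker := by
  obtain ⟨e, he, hTe, horth⟩ := exists_orthonormal_seq_orthogonal_apply_ne_zero hT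
  have hul : Orthonormal 𝕜 (u ∘ Sum.inl) := hu.comp _ Sum.inl_injective
  have hur : Orthonormal 𝕜 (u ∘ Sum.inr) := hu.comp _ Sum.inr_injective
  let R : H →L[𝕜] E := orthonormalPartialIsometry hul he + orthonormalPartialIsometry hur he
  have hRl (n : ℕ) : R (u (.inl n)) = e n := by
    have hl := orthonormalPartialIsometry_apply_self hul he n
    have hr := orthonormalPartialIsometry_apply_eq_zero hur he (x := u (.inl n))
      fun _ => hu.2 Sum.inr_ne_inl
    simpa [R, hr] using hl
  have hRr (n : ℕ) : R (u (.inr n)) = e n := by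
    have hl := orthonormalPartialIsometry_apply_eq_zero hul he (x := u (.inr n))
      fun _ => hu.2 Sum.inl_ne_inr
    have hr := orthonormalPartialIsometry_apply_self hur he n
    simpa [R, hl] using hr
  have hR_adjoint (n : ℕ) :
      (R†) ((T†) (T (e n))) = ⟪T (e n), T (e n)⟫_𝕜 • (u (.inl n) + u (.inr n)) := by
    have hgram (m : ℕ) : ⟪e m, (T†) (T (e n))⟫_𝕜 = ⟪T (e m), T (e n)⟫_𝕜 :=
      T.adjoint_inner_right _ _
    have hzero (m : ℕ) (hm : m ≠ n) : ⟪e m, (T†) (T (e n))⟫_𝕜 = 0 := (hgram m).trans (horth hm)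
    simp only [R, map_add, adjoint_orthonormalPartialIsometry, add_apply,
      orthonormalPartialIsometry_apply_eq_inner_smul he _ hzero, hgram, smul_add,
      Function.comp_apply]
  refine ⟨R, fun n => ⟨⟨(⟪T (e n), T (e n)⟫_𝕜)⁻¹ • u (.inl n), ?_⟩, ?_⟩⟩
  · simp [ContinuousLinearMap.adjoint_comp, hRl, hR_adjoint, hTe n, smul_smul]
  · simp [hRl, hRr]

section Eigenvector

lemma inner_range_eq_zero_or_inner_ker_eq_zero_of_apply_eq_smul {X : H →ₗ[𝕜] H} (hX : X.IsSymmetric)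
    {v f g : H} {d : 𝕜} (hv : X v = d • v) (hf : f ∈ X.range) (hg : g ∈ X.ker) :
    ⟪f, v⟫_𝕜 = 0 ∨ ⟪g, v⟫_𝕜 = 0 := by
  obtain rfl | hd := eq_or_ne d 0
  · obtain ⟨w, rfl⟩ := hf
    exact .inl (by rw [hX, hv, zero_smul, inner_zero_right])
  · have hdg : d * ⟪g, v⟫_𝕜 = 0 := by
      rw [← inner_smul_right, ← hv, ← hX, hg, inner_zero_left]
    exact .inr ((mul_eq_zero.1 hdg).resolve_left hd)

lemma one_le_norm_mul_norm_sub {v x z : H} (hzv : ⟪z, v⟫_𝕜 = 0) (hzx : ⟪z, x⟫_𝕜 = 1) :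
    1 ≤ ‖z‖ * ‖v - x‖ := by
  simpa [inner_sub_right, hzv, hzx] using norm_inner_le_norm (𝕜 := 𝕜) z (v - x)

lemma half_le_norm_sub_of_inner_add_or_inner_sub_eq_zero {v x y : H} (hx : ‖x‖ = 1) (hy : ‖y‖ = 1)
    (hxy : ⟪x, y⟫_𝕜 = 0) (hv : ⟪x + y, v⟫_𝕜 = 0 ∨ ⟪x - y, v⟫_𝕜 = 0) : 1 / 2 ≤ ‖v - x‖ := by
  have hxx : ⟪x, x⟫_𝕜 = 1 := by simp [inner_self_eq_norm_sq_to_K, hx]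
  have hyx : ⟪y, x⟫_𝕜 = 0 := inner_eq_zero_symm.1 hxy
  rcases hv with hv | hv
  · have h := one_le_norm_mul_norm_sub hv (x := x) (by rw [inner_add_left, hxx, hyx, add_zero])
    nlinarith [norm_add_le x y, norm_nonneg (v - x)]
  · have h := one_le_norm_mul_norm_sub hv (x := x) (by rw [inner_sub_left, hxx, hyx, sub_zero])
    nlinarith [norm_sub_le x y, norm_nonneg (v - x)]

lemma exists_comp_forall_eigenvector_half_le_norm_sub [CompleteSpace E] [CompleteSpace F]
    [CompleteSpace H] {T : E →L[𝕜] F} (hT : ¬ FiniteDimensional 𝕜 (T : E →ₗ[𝕜] F).range)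
    {u : ℕ ⊕ ℕ → H} (hu : Orthonormal 𝕜 u) :
    ∃ R : H →L[𝕜] E, ∀ (n : ℕ) (v : H) (d : 𝕜),
      ((T ∘L R)† ∘L (T ∘L R)) v = d • v → 1 / 2 ≤ ‖v - u (.inl n)‖ := by
  obtain ⟨R, hR⟩ := exists_comp_add_mem_range_sub_mem_ker hT hu
  have hsymm := (T ∘L R).isPositive_adjoint_comp_self.isSymmetric
  exact ⟨R, fun n v d hv => half_le_norm_sub_of_inner_add_or_inner_sub_eq_zero (hu.1 _) (hu.1 _)
    (hu.2 Sum.inl_ne_inr)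
    (inner_range_eq_zero_or_inner_ker_eq_zero_of_apply_eq_smul hsymm hv (hR n).1 (hR n).2)⟩

lemma conj_apply_eq_smul_of_star_mul_self [CompleteSpace H] {W D : H →L[𝕜] H}
    (hW : star W * W = 1) {x : H} {c : 𝕜} (hx : D x = c • x) :
    (W * D * star W) (W x) = c • W x := by
  have hWx : star W (W x) = x := DFunLike.congr_fun hW x
  simp [hWx, hx]

end Eigenvector

end

theorem exists_selfAdjoint_not_restricted_diagonalizable_general
    {H ι : Type*} [NormedAddCommGroup H] [InnerProductSpace ℂ H] [CompleteSpace H] [Infinite ι]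
    {u : ι → H} (hu : Orthonormal ℂ u) {I : Set (H →L[ℂ] H)} (hI : IsOperatorIdeal I)
    (hFlt : ∃ T ∈ I, ¬ FiniteDimensional ℂ (LinearMap.range (T : H →ₗ[ℂ] H))) :
    ∃ X ∈ I, star X = X ∧
      ¬ ∃ W D : H →L[ℂ] H, W ∈ unitary (H →L[ℂ] H) ∧ IsCompactOperator (W - 1 : H →L[ℂ] H) ∧
        (∀ i, ∃ c : ℂ, D (u i) = c • u i) ∧ X = W * D * star W := by
  obtain ⟨T, hTI, hT⟩ := hFlt
  let φ : ℕ ⊕ ℕ ↪ ι := Equiv.natSumNatEquivNat.toEmbedding.trans (Infinite.natEmbedding ι)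
  obtain ⟨R, hR⟩ := exists_comp_forall_eigenvector_half_le_norm_sub hT (hu.comp φ φ.injective)
  have hTR : T * R ∈ I := (hI.2.2.2 R T hTI).2
  refine ⟨star (T * R) * (T * R), (hI.2.2.2 _ _ hTR).1, by rw [star_mul, star_star], ?_⟩
  rintro ⟨W, D, hW, hWK, hD, hX⟩
  have hul : Orthonormal ℂ (u ∘ φ ∘ Sum.inl) := hu.comp _ (φ.injective.comp Sum.inl_injective)
  obtain ⟨n, hn⟩ := ((tendsto_compactOperator_comp_orthonormal hul hWK).norm.eventually_lt_const
    (by norm_num : ‖(0 : H)‖ < 1 / 2)).exists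
  obtain ⟨c, hc⟩ := hD (φ (.inl n))
  have heig : (star (T * R) * (T * R)) (W (u (φ (.inl n)))) = c • W (u (φ (.inl n))) := by
    rw [hX, conj_apply_eq_smul_of_star_mul_self (Unitary.star_mul_self_of_mem hW) hc]
  exact (hR n _ c heig).not_gt hn

/-- Let `I` be an operator ideal with `F(H) ⊊ I ⊆ K(H)` (so `I` contains an
operator of infinite rank).  Then there exists a self-adjoint `X ∈ I` which is not
`U_I(H)`-diagonalizable with respect to the basis `b`: there is no unitary `W` with
`W - 1 ∈ I` and no self-adjoint diagonal `D ∈ I` such that `X = W D W*`.  In particular,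
`𝒟_I^{sa}` is a proper subset of `I^{sa}`. -/
theorem exists_selfAdjoint_not_restricted_diagonalizable
    {H : Type*} [NormedAddCommGroup H] [InnerProductSpace ℂ H] [CompleteSpace H]
    (b : HilbertBasis ℕ ℂ H)
    (I : Set (H →L[ℂ] H)) (hI : IsOperatorIdeal I)
    (hFI : ∀ T : H →L[ℂ] H,
      FiniteDimensional ℂ (LinearMap.range (T : H →ₗ[ℂ] H)) → T ∈ I)
    (hFlt : ∃ T ∈ I, ¬ FiniteDimensional ℂ (LinearMap.range (T : H →ₗ[ℂ] H)))
    (hIK : ∀ T ∈ I, IsCompactOperator (T : H →L[ℂ] H)) :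
    ∃ X ∈ I, star X = X ∧
      ¬ ∃ (W D : H →L[ℂ] H), W ∈ unitary (H →L[ℂ] H) ∧ W - 1 ∈ I ∧
        D ∈ I ∧ star D = D ∧ (∀ n : ℕ, ∃ c : ℂ, D (b n) = c • b n) ∧
        X = W * D * star W := by
  obtain ⟨X, hXI, hX, hdiag⟩ :=
    exists_selfAdjoint_not_restricted_diagonalizable_general b.orthonormal hI hFlt
  exact ⟨X, hXI, hX, fun ⟨W, D, hW, hWI, _, _, hD, hXW⟩ => hdiag ⟨W, D, hW, hIK _ hWI, hD, hXW⟩⟩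
end

section
/- Let I be any operator ideal in B(H). If X ∈ I and WXW⁻¹ = D for some W ∈ U_I(H) and some D diagonal with respect to the basis b, then X is a normal operator and X − D belongs to I², the linear span of {AB : A, B ∈ I}. -/
/-!
Since `W X W* = D` says `W X = D W`, we have `X - D = D (W - 1) - (W - 1) X`, and all of `X`, `D`
and `W - 1` lie in `I`. A diagonal operator is normal because its adjoint is diagonal in the same
basis, and normality is invariant under unitary conjugation.
-/

theorem isStarNormal_unitary_conj_iff {A : Type*} [Semiring A] [StarMul A] {W : A}
    (hW : W ∈ unitary A) {X : A} : IsStarNormal (W * X * star W) ↔ IsStarNormal X := by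
  let φ := Unitary.conjStarAlgAut ℕ A ⟨W, hW⟩
  refine ⟨fun hD ↦ ?_, fun hX ↦ hX.map φ⟩
  simpa only [φ.symm_apply_apply] using IsStarNormal.map φ.symm (r := φ X) (hr := hD)

theorem sub_mem_span_mul_of_semiconjBy (R : Type*) {A : Type*} [Ring R] [Ring A] [Module R A]
    {I : Set A} {W X D : A} (hX : X ∈ I) (hD : D ∈ I) (hWI : W - 1 ∈ I)
    (h : SemiconjBy W X D) :
    X - D ∈ Submodule.span R {T : A | ∃ B ∈ I, ∃ C ∈ I, B * C = T} := by
  have h_sub : X - D = D * (W - 1) - (W - 1) * X := by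
    rw [mul_sub, sub_mul, h.eq, mul_one, one_mul]
    abel
  rw [h_sub]
  exact sub_mem (Submodule.subset_span ⟨D, hD, W - 1, hWI, rfl⟩)
    (Submodule.subset_span ⟨W - 1, hWI, X, hX, rfl⟩)

section DiagonalOperator

variable {ι 𝕜 E : Type*} [RCLike 𝕜] [NormedAddCommGroup E] [InnerProductSpace 𝕜 E]

theorem continuousLinearMap_ext_hilbertBasis {F : Type*} [AddCommMonoid F] [Module 𝕜 F]
    [TopologicalSpace F] [T2Space F] (b : HilbertBasis ι 𝕜 E) {S T : E →L[𝕜] F}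
    (h : ∀ i, S (b i) = T (b i)) : S = T :=
  ContinuousLinearMap.ext_on (Submodule.dense_iff_topologicalClosure_eq_top.mpr b.dense_span)
    (Set.forall_mem_range.mpr h)

variable [CompleteSpace E] {D : E →L[𝕜] E}

theorem adjoint_apply_hilbertBasis_of_diagonal (b : HilbertBasis ι 𝕜 E) {c : ι → 𝕜}
    (hD : ∀ i, D (b i) = c i • b i) (i : ι) :
    D.adjoint (b i) = starRingEnd 𝕜 (c i) • b i := by
  classical
  refine b.repr.injective (lp.ext (funext fun j ↦ ?_))
  rw [b.repr_apply_apply, b.repr_apply_apply, ContinuousLinearMap.adjoint_inner_right, hD,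
    inner_smul_left, inner_smul_right, orthonormal_iff_ite.mp b.orthonormal]
  split_ifs with hji
  · rw [hji]
  · rw [mul_zero, mul_zero]

theorem isStarNormal_of_diagonal (b : HilbertBasis ι 𝕜 E)
    (hD : ∀ i, ∃ c : 𝕜, D (b i) = c • b i) : IsStarNormal D := by
  choose c hc using hD
  refine ⟨continuousLinearMap_ext_hilbertBasis b fun i ↦ ?_⟩
  simp only [ContinuousLinearMap.star_eq_adjoint, mul_apply_eq_comp, hc,
    adjoint_apply_hilbertBasis_of_diagonal b hc, map_smul, smul_comm (c i)]

end DiagonalOperator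

theorem normal_and_sub_diagonal_mem_ideal_squared_general
    {R A : Type*} [Ring R] [Ring A] [StarMul A] [Module R A]
    {I : Set A} (hI : ∀ T B : A, B ∈ I → T * B ∈ I ∧ B * T ∈ I)
    {X : A} (hX : X ∈ I) {W : A} (hW : W ∈ unitary A) (hWI : W - 1 ∈ I)
    {D : A} (hD : IsStarNormal D) (hWXW : W * X * star W = D) :
    star X * X = X * star X ∧
      X - D ∈ Submodule.span R {T : A | ∃ B ∈ I, ∃ C ∈ I, B * C = T} := by
  subst hWXW
  have hX_normal : IsStarNormal X := (isStarNormal_unitary_conj_iff hW).mp hD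
  have hD_mem : W * X * star W ∈ I := (hI _ _ (hI W X hX).1).2
  have h_semiconj : SemiconjBy W X (W * X * star W) := by
    rw [SemiconjBy, mul_assoc (W * X), Unitary.star_mul_self_of_mem hW, mul_one]
  exact ⟨hX_normal.star_comm_self, sub_mem_span_mul_of_semiconjBy R hX hD_mem hWI h_semiconj⟩

/-- Let `I` be any operator ideal in `B(H)`.  If `X ∈ I` and
`W X W⁻¹ = D` for some `W ∈ U_I(H)` and some `D` which is diagonal with respect to the basis
`b`, then `X` is normal and `X - D` belongs to `I²`, the linear span of `{AB : A, B ∈ I}`. -/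
theorem normal_and_sub_diagonal_mem_ideal_squared
    {H : Type*} [NormedAddCommGroup H] [InnerProductSpace ℂ H] [CompleteSpace H]
    (b : HilbertBasis ℕ ℂ H)
    (I : Set (H →L[ℂ] H)) (hI : IsOperatorIdeal I)
    (X : H →L[ℂ] H) (hX : X ∈ I)
    (W : H →L[ℂ] H) (hW : W ∈ unitary (H →L[ℂ] H)) (hWI : W - 1 ∈ I)
    (D : H →L[ℂ] H) (hDdiag : ∀ n : ℕ, ∃ c : ℂ, D (b n) = c • b n)
    (hWXW : W * X * star W = D) :
    star X * X = X * star X ∧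
      X - D ∈ Submodule.span ℂ {T : H →L[ℂ] H | ∃ A ∈ I, ∃ B ∈ I, A * B = T} :=
  normal_and_sub_diagonal_mem_ideal_squared_general hI.2.2.2 hX hW hWI
    (isStarNormal_of_diagonal b hDdiag) hWXW
end

section
/- There exists an injective linear map Π : B(H) → B(H) with the following properties: (i) Π(RST) = Π(R)Π(S)Π(T) for all R, S, T ∈ B(H); (ii) for all S, T ∈ B(H), ST = TS if and only if Π(S)Π(T) = Π(T)Π(S); (iii) Π(T*) = Π(T)* for every T ∈ B(H); (iv) the only positive operator in the range of Π is 0; (v) for any two operator ideals I₁, I₂ of B(H), I₁ ⊆ I₂ if and only if Π(I₁) ⊆ Π(I₂); (vi) for every operator ideal I of B(H): Π(I) ⊆ I, Π⁻¹(I) ⊆ I, and for every A ∈ B(H), if Π(A) = WDW* for some W ∈ U_I(H) and some D ∈ 𝒟 ∩ I, then A belongs to I², the linear span of {XY : X, Y ∈ I}. -/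
section UnitaryConjugate

variable {A : Type*} [Ring A] [StarRing A]

lemma star_sub_one_mem_of_mem_unitary {I : TwoSidedIdeal A} {w : A} (hw : w ∈ unitary A)
    (hwI : w - 1 ∈ I) : star w - 1 ∈ I := by
  have h : star w - 1 = -star w * (w - 1) := by
    rw [mul_sub, neg_mul, Unitary.star_mul_self_of_mem hw]
    noncomm_ring
  exact h ▸ I.mul_mem_left _ _ hwI

open scoped Pointwise in
lemma mul_unitary_conjugate_mul_mem_span_mul {R : Type*} [Semiring R] [Module R A]
    {I : TwoSidedIdeal A} {p q w d : A} (hw : w ∈ unitary A) (hwI : w - 1 ∈ I)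
    (hd : d ∈ I) (hpq : p * d * q = 0) :
    p * (w * d * star w) * q ∈ Submodule.span R ((I : Set A) * (I : Set A)) := by
  have hdecomp : p * (w * d * star w) * q
      = (p * (w - 1)) * (d * star w * q) + (p * d) * ((star w - 1) * q) := by
    calc p * (w * d * star w) * q = p * (w * d * star w) * q - p * d * q := by rw [hpq, sub_zero]
      _ = _ := by noncomm_ring
  rw [hdecomp]
  refine add_mem (Submodule.subset_span (Set.mul_mem_mul ?_ ?_))
    (Submodule.subset_span (Set.mul_mem_mul ?_ ?_))
  · exact I.mul_mem_left _ _ hwI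
  · exact I.mul_mem_right _ _ (I.mul_mem_right _ _ hd)
  · exact I.mul_mem_left _ _ hd
  · exact I.mul_mem_right _ _ (star_sub_one_mem_of_mem_unitary hw hwI)

end UnitaryConjugate

section OffDiagonal

variable (R : Type*) {A : Type*} [CommSemiring R]

/-- Two isometries `u`, `v` of a star ring with orthogonal ranges. Unlike for the generators of the
Cuntz algebra `𝒪₂`, the ranges need not add up to `1`. -/
structure IsOrthogonalIsometryPair [Semiring A] [StarRing A] (u v : A) : Prop where
  star_left_mul_left : star u * u = 1
  star_right_mul_right : star v * v = 1
  star_left_mul_right : star u * v = 0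

/-- The linear map `T ↦ u T v* + v T u*`. With respect to the ranges of an orthogonal pair of
isometries `u`, `v` it sends `T` to the block matrix with rows `(0, T)` and `(T, 0)`. -/
def offDiagonal [Semiring A] [StarRing A] [Algebra R A] (u v : A) : A →ₗ[R] A :=
  LinearMap.mulLeftRight R (u, star v) + LinearMap.mulLeftRight R (v, star u)

section Semiring

variable [Semiring A] [StarRing A] [Algebra R A]

lemma offDiagonal_apply (u v T : A) :
    offDiagonal R u v T = u * T * star v + v * T * star u := rfl

lemma offDiagonal_star (u v T : A) :
    offDiagonal R u v (star T) = star (offDiagonal R u v T) := by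
  simp [offDiagonal_apply, mul_assoc, add_comm]

namespace IsOrthogonalIsometryPair

variable {u v S T : A} (huv : IsOrthogonalIsometryPair u v)
include huv

lemma star_right_mul_left : star v * u = 0 := by
  simpa using congrArg star huv.star_left_mul_right

lemma offDiagonal_mul_left : offDiagonal R u v T * u = v * T := by
  simp [offDiagonal_apply, add_mul, mul_assoc, huv.star_left_mul_left, huv.star_right_mul_left]

lemma offDiagonal_mul_right : offDiagonal R u v T * v = u * T := by
  simp [offDiagonal_apply, add_mul, mul_assoc, huv.star_right_mul_right, huv.star_left_mul_right]

lemma star_left_mul_offDiagonal_mul_right : star u * offDiagonal R u v T * v = T := by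
  rw [mul_assoc, huv.offDiagonal_mul_right R, ← mul_assoc, huv.star_left_mul_left, one_mul]

lemma offDiagonal_injective : Function.Injective (offDiagonal R u v) :=
  Function.LeftInverse.injective (g := fun X ↦ star u * X * v) fun _ ↦
    huv.star_left_mul_offDiagonal_mul_right R

lemma offDiagonal_mul_offDiagonal :
    offDiagonal R u v S * offDiagonal R u v T = u * (S * T) * star u + v * (S * T) * star v := by
  rw [offDiagonal_apply R u v T]
  simp only [mul_add, ← mul_assoc, huv.offDiagonal_mul_left R, huv.offDiagonal_mul_right R]
  rw [add_comm]

lemma offDiagonal_mul_mul (Q S T : A) :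
    offDiagonal R u v (Q * S * T)
      = offDiagonal R u v Q * offDiagonal R u v S * offDiagonal R u v T := by
  rw [mul_assoc (offDiagonal R u v Q), huv.offDiagonal_mul_offDiagonal R, offDiagonal_apply]
  simp only [mul_add, ← mul_assoc, huv.offDiagonal_mul_left R, huv.offDiagonal_mul_right R]
  rw [add_comm]

lemma star_left_mul_offDiagonal_mul_offDiagonal_mul_left :
    star u * (offDiagonal R u v S * offDiagonal R u v T) * u = S * T := by
  rw [← mul_assoc, mul_assoc, huv.offDiagonal_mul_left R, ← mul_assoc,
    huv.star_left_mul_offDiagonal_mul_right R]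

lemma commute_offDiagonal_iff :
    Commute (offDiagonal R u v S) (offDiagonal R u v T) ↔ Commute S T := by
  rw [commute_iff_eq, commute_iff_eq]
  refine ⟨fun h ↦ ?_, fun h ↦ ?_⟩
  · simpa only [huv.star_left_mul_offDiagonal_mul_offDiagonal_mul_left R]
      using congrArg (fun X ↦ star u * X * u) h
  · rw [huv.offDiagonal_mul_offDiagonal R, huv.offDiagonal_mul_offDiagonal R, h]

end IsOrthogonalIsometryPair

end Semiring

section Ring

variable [Ring A] [StarRing A]

namespace IsOrthogonalIsometryPair

variable [Algebra R A] {u v T : A} (huv : IsOrthogonalIsometryPair u v)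
include huv

lemma conjugate_offDiagonal :
    (u * star u - v * star v) * offDiagonal R u v T * star (u * star u - v * star v)
      = -offDiagonal R u v T := by
  have hu : (u * star u - v * star v) * u = u := by
    simp [sub_mul, mul_assoc, huv.star_left_mul_left, huv.star_right_mul_left]
  have hv : (u * star u - v * star v) * v = -v := by
    simp [sub_mul, mul_assoc, huv.star_right_mul_right, huv.star_left_mul_right]
  have hu_star := congrArg star hu
  have hv_star := congrArg star hv
  rw [star_mul] at hu_star hv_star
  rw [offDiagonal_apply]
  simp only [mul_add, add_mul, ← mul_assoc, hu, hv]
  simp only [mul_assoc, hu_star, hv_star, star_neg]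
  noncomm_ring

lemma offDiagonal_eq_zero_of_nonneg [PartialOrder A] [StarOrderedRing A]
    (hT : 0 ≤ offDiagonal R u v T) : offDiagonal R u v T = 0 := by
  have hneg : 0 ≤ -offDiagonal R u v T := by
    simpa only [huv.conjugate_offDiagonal R]
      using star_right_conjugate_nonneg hT (u * star u - v * star v)
  exact le_antisymm (neg_nonneg.1 hneg) hT

lemma offDiagonal_mem_iff {I : TwoSidedIdeal A} : offDiagonal R u v T ∈ I ↔ T ∈ I := by
  refine ⟨fun h ↦ ?_, fun h ↦ ?_⟩
  · rw [← huv.star_left_mul_offDiagonal_mul_right R (T := T)]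
    exact I.mul_mem_right _ _ (I.mul_mem_left _ _ h)
  · exact I.add_mem (I.mul_mem_right _ _ (I.mul_mem_left _ _ h))
      (I.mul_mem_right _ _ (I.mul_mem_left _ _ h))

end IsOrthogonalIsometryPair

variable {R}

open scoped Pointwise in
lemma IsOrthogonalIsometryPair.mem_span_mul_of_offDiagonal_eq [Algebra R A] {I : TwoSidedIdeal A}
    {u v w d T : A} (huv : IsOrthogonalIsometryPair u v) (hw : w ∈ unitary A) (hwI : w - 1 ∈ I)
    (hd : d ∈ I) (hduv : star u * d * v = 0) (hT : offDiagonal R u v T = w * d * star w) :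
    T ∈ Submodule.span R ((I : Set A) * (I : Set A)) := by
  rw [← huv.star_left_mul_offDiagonal_mul_right R (T := T), hT]
  exact mul_unitary_conjugate_mul_mem_span_mul hw hwI hd hduv

end Ring

end OffDiagonal

section HilbertBasis

variable {𝕜 ι κ E F G : Type*} [RCLike 𝕜]
  [NormedAddCommGroup E] [InnerProductSpace 𝕜 E] [NormedAddCommGroup F] [InnerProductSpace 𝕜 F]
  [NormedAddCommGroup G] [InnerProductSpace 𝕜 G]

lemma eq_zero_of_forall_inner_hilbertBasis_eq_zero (b : HilbertBasis ι 𝕜 E)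
    (c : HilbertBasis κ 𝕜 F) {T : E →L[𝕜] F} (h : ∀ k i, inner 𝕜 (c k) (T (b i)) = 0) :
    T = 0 := by
  refine ContinuousLinearMap.ext_on
    (Submodule.dense_iff_topologicalClosure_eq_top.2 b.dense_span) ?_
  rintro _ ⟨i, rfl⟩
  refine c.repr.injective (lp.ext (funext fun k ↦ ?_))
  simpa [c.repr_apply_apply] using h k i

lemma inner_map_eq_zero_of_forall_eq_smul {v : ι → E} (hv : Orthonormal 𝕜 v) {D : E → E}
    (hD : ∀ i, ∃ c : 𝕜, D (v i) = c • v i) {i j : ι} (hij : i ≠ j) :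
    inner 𝕜 (v i) (D (v j)) = 0 := by
  obtain ⟨c, hc⟩ := hD j
  rw [hc, inner_smul_right, hv.inner_eq_zero hij, mul_zero]

section Isometry

variable [CompleteSpace F]

/-- The isometry that maps the vectors of a Hilbert basis to those of a given orthonormal family. -/
noncomputable def isometryOfOrthonormal (b : HilbertBasis ι 𝕜 E) {v : ι → F}
    (hv : Orthonormal 𝕜 v) : E →ₗᵢ[𝕜] F :=
  hv.orthogonalFamily.linearIsometry.comp b.repr.toLinearIsometry

lemma isometryOfOrthonormal_apply_basis (b : HilbertBasis ι 𝕜 E) {v : ι → F}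
    (hv : Orthonormal 𝕜 v) (i : ι) : isometryOfOrthonormal b hv (b i) = v i := by
  classical
  simp [isometryOfOrthonormal, b.repr_self, OrthogonalFamily.linearIsometry_apply_single]

lemma adjoint_comp_comp_isometryOfOrthonormal_eq_zero [CompleteSpace E] [CompleteSpace G]
    (b : HilbertBasis ι 𝕜 E) {v : ι → F} (hv : Orthonormal 𝕜 v)
    {w : ι → G} (hw : Orthonormal 𝕜 w) {D : G →L[𝕜] F}
    (hD : ∀ i j, inner 𝕜 (v i) (D (w j)) = 0) :
    (isometryOfOrthonormal b hv).toContinuousLinearMap.adjoint ∘L D ∘L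
      (isometryOfOrthonormal b hw).toContinuousLinearMap = 0 := by
  refine eq_zero_of_forall_inner_hilbertBasis_eq_zero b b fun i j ↦ ?_
  simpa [ContinuousLinearMap.adjoint_inner_right, isometryOfOrthonormal_apply_basis] using hD i j

end Isometry

lemma exists_isOrthogonalIsometryPair_of_hilbertBasis [CompleteSpace E] [Infinite ι]
    (b : HilbertBasis ι 𝕜 E) :
    ∃ u v : E →L[𝕜] E, IsOrthogonalIsometryPair u v ∧
      ∀ D : E →L[𝕜] E, (∀ i, ∃ c : 𝕜, D (b i) = c • b i) → star u * D * v = 0 := by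
  obtain ⟨e⟩ : Nonempty (ι ⊕ ι ≃ ι) := Cardinal.eq.1 (by simp)
  have hleft := b.orthonormal.comp _ (e.injective.comp Sum.inl_injective)
  have hright := b.orthonormal.comp _ (e.injective.comp Sum.inr_injective)
  let u := (isometryOfOrthonormal b hleft).toContinuousLinearMap
  let v := (isometryOfOrthonormal b hright).toContinuousLinearMap
  have hdiag (D : E →L[𝕜] E) (hD : ∀ i, ∃ c : 𝕜, D (b i) = c • b i) : star u * D * v = 0 :=
    adjoint_comp_comp_isometryOfOrthonormal_eq_zero b hleft hright fun _ _ ↦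
      inner_map_eq_zero_of_forall_eq_smul b.orthonormal hD (e.injective.ne Sum.inl_ne_inr)
  refine ⟨u, v, ⟨?_, ?_, ?_⟩, hdiag⟩
  · exact u.norm_map_iff_adjoint_comp_self.1 (isometryOfOrthonormal b hleft).norm_map
  · exact v.norm_map_iff_adjoint_comp_self.1 (isometryOfOrthonormal b hright).norm_map
  · simpa using hdiag 1 fun i ↦ ⟨1, by simp⟩

end HilbertBasis

lemma IsOperatorIdeal.exists_twoSidedIdeal {H : Type*} [NormedAddCommGroup H]
    [InnerProductSpace ℂ H] {I : Set (H →L[ℂ] H)} (hI : IsOperatorIdeal I) :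
    ∃ J : TwoSidedIdeal (H →L[ℂ] H), (J : Set (H →L[ℂ] H)) = I := by
  obtain ⟨hzero, hadd, hsmul, hmul⟩ := hI
  exact ⟨.mk' I hzero (hadd _ _) (fun h ↦ by simpa using hsmul (-1) _ h)
    (fun h ↦ (hmul _ _ h).1) (fun h ↦ (hmul _ _ h).2), TwoSidedIdeal.coe_mk' ..⟩

theorem exists_triple_system_homomorphism_general
    {H : Type*} [NormedAddCommGroup H] [InnerProductSpace ℂ H] [CompleteSpace H]
    {ι : Type*} [Infinite ι] (b : HilbertBasis ι ℂ H) :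
    ∃ P : (H →L[ℂ] H) →ₗ[ℂ] (H →L[ℂ] H),
      Function.Injective P ∧
      (∀ R S T : H →L[ℂ] H, P (R * S * T) = P R * P S * P T) ∧
      (∀ S T : H →L[ℂ] H, S * T = T * S ↔ P S * P T = P T * P S) ∧
      (∀ T : H →L[ℂ] H, P (star T) = star (P T)) ∧
      (∀ T : H →L[ℂ] H, (P T).IsPositive → P T = 0) ∧
      (∀ I₁ I₂ : Set (H →L[ℂ] H), IsOperatorIdeal I₁ → IsOperatorIdeal I₂ →
        (I₁ ⊆ I₂ ↔ P '' I₁ ⊆ P '' I₂)) ∧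
      (∀ I : Set (H →L[ℂ] H), IsOperatorIdeal I →
        (∀ T ∈ I, P T ∈ I) ∧
        (∀ T : H →L[ℂ] H, P T ∈ I → T ∈ I) ∧
        (∀ A W D : H →L[ℂ] H, W ∈ unitary (H →L[ℂ] H) → W - 1 ∈ I → D ∈ I →
          (∀ i : ι, ∃ c : ℂ, D (b i) = c • b i) →
          P A = W * D * star W →
          A ∈ Submodule.span ℂ {T : H →L[ℂ] H | ∃ X ∈ I, ∃ Y ∈ I, X * Y = T})) := by
  obtain ⟨u, v, huv, hdiag⟩ := exists_isOrthogonalIsometryPair_of_hilbertBasis b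
  refine ⟨offDiagonal ℂ u v, huv.offDiagonal_injective ℂ, huv.offDiagonal_mul_mul ℂ,
    fun S T ↦ (huv.commute_offDiagonal_iff ℂ).symm, offDiagonal_star ℂ u v, fun T hT ↦ ?_,
    fun I₁ I₂ _ _ ↦ (Set.image_subset_image_iff (huv.offDiagonal_injective ℂ)).symm,
    fun I hI ↦ ?_⟩
  · exact huv.offDiagonal_eq_zero_of_nonneg ℂ ((ContinuousLinearMap.nonneg_iff_isPositive _).2 hT)
  · obtain ⟨I, rfl⟩ := hI.exists_twoSidedIdeal
    exact ⟨fun T ↦ (huv.offDiagonal_mem_iff ℂ).2, fun T ↦ (huv.offDiagonal_mem_iff ℂ).1,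
      fun A W D hW hWI hDI hD hA ↦
        huv.mem_span_mul_of_offDiagonal_eq hW hWI hDI (hdiag D hD) hA⟩

/-- There exists an injective linear map `P : B(H) → B(H)` such that:
(i) `P (RST) = P R * P S * P T`; (ii) `S` and `T` commute iff `P S` and `P T` commute;
(iii) `P (T*) = (P T)*`; (iv) the only positive operator in the range of `P` is `0`;
(v) for ideals `I₁, I₂`, `I₁ ⊆ I₂` iff `P '' I₁ ⊆ P '' I₂`; (vi) for every ideal `I`:
`P '' I ⊆ I`, `P⁻¹ I ⊆ I`, and whenever `P A = W D W*` with `W ∈ U_I(H)` and `D ∈ 𝒟 ∩ I`,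
one has `A ∈ I²` (the linear span of products of two elements of `I`). -/
theorem exists_triple_system_homomorphism
    {H : Type*} [NormedAddCommGroup H] [InnerProductSpace ℂ H] [CompleteSpace H]
    (b : HilbertBasis ℕ ℂ H) :
    ∃ P : (H →L[ℂ] H) →ₗ[ℂ] (H →L[ℂ] H),
      Function.Injective P ∧
      (∀ R S T : H →L[ℂ] H, P (R * S * T) = P R * P S * P T) ∧
      (∀ S T : H →L[ℂ] H, S * T = T * S ↔ P S * P T = P T * P S) ∧
      (∀ T : H →L[ℂ] H, P (star T) = star (P T)) ∧
      (∀ T : H →L[ℂ] H, (P T).IsPositive → P T = 0) ∧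
      (∀ I₁ I₂ : Set (H →L[ℂ] H), IsOperatorIdeal I₁ → IsOperatorIdeal I₂ →
        (I₁ ⊆ I₂ ↔ P '' I₁ ⊆ P '' I₂)) ∧
      (∀ I : Set (H →L[ℂ] H), IsOperatorIdeal I →
        (∀ T ∈ I, P T ∈ I) ∧
        (∀ T : H →L[ℂ] H, P T ∈ I → T ∈ I) ∧
        (∀ A W D : H →L[ℂ] H, W ∈ unitary (H →L[ℂ] H) → W - 1 ∈ I → D ∈ I →
          (∀ n : ℕ, ∃ c : ℂ, D (b n) = c • b n) →
          P A = W * D * star W →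
          A ∈ Submodule.span ℂ {T : H →L[ℂ] H | ∃ X ∈ I, ∃ Y ∈ I, X * Y = T})) :=
  exists_triple_system_homomorphism_general b
end

section
/- Let I ⊆ J be operator ideals with {0} ≠ I and J ⊆ K(H). If C is a Cartan subalgebra of J, then C ∩ I is a Cartan subalgebra of I. -/
/-- `C` is a self-adjoint complex-linear subspace of `I` consisting of mutually
commuting operators. -/
def IsCommSelfAdjointSubspace {H : Type*} [NormedAddCommGroup H] [InnerProductSpace ℂ H]
    [CompleteSpace H] (I C : Set (H →L[ℂ] H)) : Prop :=
  C ⊆ I ∧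
  (0 : H →L[ℂ] H) ∈ C ∧
  (∀ S T : H →L[ℂ] H, S ∈ C → T ∈ C → S + T ∈ C) ∧
  (∀ (c : ℂ) (T : H →L[ℂ] H), T ∈ C → c • T ∈ C) ∧
  (∀ T ∈ C, star T ∈ C) ∧
  (∀ S T : H →L[ℂ] H, S ∈ C → T ∈ C → S * T = T * S)

/-- `C` is a Cartan subalgebra of the operator ideal `I`. -/
def IsCartanSubalgebra {H : Type*} [NormedAddCommGroup H] [InnerProductSpace ℂ H]
    [CompleteSpace H] (I C : Set (H →L[ℂ] H)) : Prop :=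
  IsCommSelfAdjointSubspace I C ∧
  ∀ C' : Set (H →L[ℂ] H), IsCommSelfAdjointSubspace I C' → C ⊆ C' → C' = C

open InnerProductSpace Module.End
open scoped ComplexStarModule

section InnerProductSpace

variable {𝕜 F : Type*} [RCLike 𝕜] [NormedAddCommGroup F] [InnerProductSpace 𝕜 F]

lemma commute_starProjection_iff_mem_invtSubmodule {U : Submodule 𝕜 F} [U.HasOrthogonalProjection]
    {S : F →L[𝕜] F} :
    Commute U.starProjection S ↔
      U ∈ invtSubmodule S.toLinearMap ∧ Uᗮ ∈ invtSubmodule S.toLinearMap := by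
  rw [ContinuousLinearMap.IsIdempotentElem.commute_iff U.isIdempotentElem_starProjection,
    Submodule.range_starProjection, Submodule.ker_starProjection]

variable [CompleteSpace F]

/-- **Douglas factorization**: `V` extends `T x ↦ S x` by continuity to the closure of the range of
`T` and vanishes on its orthogonal complement. -/
lemma exists_continuousLinearMap_apply_eq_of_norm_le {E G : Type*} [AddCommGroup E] [Module 𝕜 E]
    [NormedAddCommGroup G] [NormedSpace 𝕜 G] [CompleteSpace G] {S : E →ₗ[𝕜] G} {T : E →ₗ[𝕜] F}
    {c : ℝ} (h : ∀ x, ‖S x‖ ≤ c * ‖T x‖) : ∃ V : F →L[𝕜] G, ∀ x, V (T x) = S x := by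
  let K : Submodule 𝕜 F := T.range.topologicalClosure
  have : CompleteSpace K := T.range.isClosed_topologicalClosure.completeSpace_coe
  let e : E →ₗ[𝕜] K :=
    T.codRestrict K fun x => T.range.le_topologicalClosure (T.mem_range_self x)
  have he : DenseRange e := by
    intro y
    rw [closure_subtype, ← Set.range_comp]
    exact y.2
  refine ⟨S.extendOfNorm e ∘L K.orthogonalProjectionOnto, fun x => ?_⟩
  have hproj : K.orthogonalProjectionOnto (T x) = e x :=
    K.orthogonalProjectionOnto_mem_subspace_eq_self (e x)
  rw [ContinuousLinearMap.comp_apply, hproj, LinearMap.extendOfNorm_eq he ⟨c, h⟩]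

variable {T : F →L[𝕜] F}

lemma eigenspace_zero_eq_iInf_orthogonal_eigenspace (hTc : IsCompactOperator T)
    (hTs : T.IsSymmetric) :
    eigenspace T.toLinearMap 0 = ⨅ μ ≠ 0, (eigenspace T.toLinearMap μ)ᗮ := by
  have horth := hTs.orthogonalFamily_eigenspaces
  refine le_antisymm (le_iInf₂ fun μ hμ => (horth.isOrtho hμ.symm).le) fun v hv => ?_
  simp only [Submodule.mem_iInf] at hv
  have hTv : T v ∈ (⨆ μ, eigenspace T.toLinearMap μ)ᗮ := by
    rw [← Submodule.iInf_orthogonal, Submodule.mem_iInf]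
    intro μ
    by_cases hμ : μ = 0
    · intro w hw
      have hw' : T w = 0 := by simpa [hμ] using hw
      exact (hTs w v).symm.trans (by simp [hw'])
    · exact hTs.invariant_orthogonalComplement_eigenspace μ v (hv μ hμ)
  rw [ContinuousLinearMap.orthogonalComplement_iSup_eigenspaces_eq_bot hTc hTs] at hTv
  simpa using hTv

lemma commute_of_forall_eigenspace_mem_invtSubmodule {X : F →L[𝕜] F} (hTc : IsCompactOperator T)
    (hTs : T.IsSymmetric)
    (hX : ∀ μ ≠ 0, eigenspace T.toLinearMap μ ∈ invtSubmodule X.toLinearMap)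
    (hX' : ∀ μ ≠ 0, (eigenspace T.toLinearMap μ)ᗮ ∈ invtSubmodule X.toLinearMap) :
    Commute T X := by
  have hzero : eigenspace T.toLinearMap 0 ∈ invtSubmodule X.toLinearMap := by
    rw [eigenspace_zero_eq_iInf_orthogonal_eigenspace hTc hTs]
    intro v hv
    simp only [Submodule.mem_comap, Submodule.mem_iInf] at hv ⊢
    exact fun μ hμ => hX' μ hμ (hv μ hμ)
  have hinv : ∀ μ, eigenspace T.toLinearMap μ ∈ invtSubmodule X.toLinearMap := fun μ =>
    if hμ : μ = 0 then hμ ▸ hzero else hX μ hμ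
  have hdense : Dense (Submodule.span 𝕜 (⋃ μ, (eigenspace T.toLinearMap μ : Set F)) : Set F) := by
    rw [← Submodule.iSup_eq_span, Submodule.dense_iff_topologicalClosure_eq_top,
      Submodule.topologicalClosure_eq_top_iff]
    exact ContinuousLinearMap.orthogonalComplement_iSup_eigenspaces_eq_bot hTc hTs
  refine ContinuousLinearMap.ext_on hdense fun v hv => ?_
  obtain ⟨μ, hv⟩ := Set.mem_iUnion.mp hv
  have hTv : T v = μ • v := mem_eigenspace_iff.mp hv
  have hTXv : T (X v) = μ • X v := mem_eigenspace_iff.mp (hinv μ hv)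
  simp only [mul_apply_eq_comp, hTv, hTXv, map_smul]

end InnerProductSpace

section OperatorIdeal

variable {H : Type*} [NormedAddCommGroup H] [InnerProductSpace ℂ H] {I : Set (H →L[ℂ] H)}

/-- An operator ideal as a complex-linear subspace of `B(H)`. -/
def IsOperatorIdeal.toSubmodule (hI : IsOperatorIdeal I) : Submodule ℂ (H →L[ℂ] H) where
  carrier := I
  zero_mem' := hI.1
  add_mem' := hI.2.1 _ _
  smul_mem' := hI.2.2.1

lemma IsOperatorIdeal.rankOne_mem (hI : IsOperatorIdeal I) {T : H →L[ℂ] H} (hT : T ∈ I)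
    (hT0 : T ≠ 0) (x y : H) : rankOne ℂ x y ∈ I := by
  obtain ⟨-, -, hsmul, hmul⟩ := hI
  obtain ⟨u, hu⟩ : ∃ u, T u ≠ 0 := by
    by_contra! h
    exact hT0 (ContinuousLinearMap.ext h)
  have hmem := (hmul (rankOne ℂ x (T u)) _ (hmul (rankOne ℂ u y) T hT).2).1
  have hcomp : rankOne ℂ x (T u) * (T * rankOne ℂ u y)
      = inner ℂ (T u) (T u) • rankOne ℂ x y := by
    simp only [ContinuousLinearMap.mul_def, comp_rankOne, rankOne_apply, map_smul, smul_apply]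
  have hne : inner ℂ (T u) (T u) ≠ 0 := inner_self_ne_zero.mpr hu
  rw [← inv_smul_smul₀ hne (rankOne ℂ x y), ← hcomp]
  exact hsmul _ _ hmem

lemma IsOperatorIdeal.starProjection_mem (hI : IsOperatorIdeal I) {T : H →L[ℂ] H} (hT : T ∈ I)
    (hT0 : T ≠ 0) (U : Submodule ℂ H) [FiniteDimensional ℂ U] : U.starProjection ∈ I := by
  rw [(stdOrthonormalBasis ℂ U).starProjection_eq_sum_rankOne]
  exact hI.toSubmodule.sum_mem fun _ _ => hI.rankOne_mem hT hT0 _ _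

lemma IsOperatorIdeal.star_mem [CompleteSpace H] (hI : IsOperatorIdeal I) {T : H →L[ℂ] H}
    (hT : T ∈ I) (hn : IsStarNormal T) : star T ∈ I := by
  have hnorm : ∀ x, ‖star T x‖ ≤ 1 * ‖T x‖ := fun x => by
    rw [one_mul]
    exact (ContinuousLinearMap.isStarNormal_iff_norm_eq_adjoint.mp hn x).ge
  obtain ⟨V, hV⟩ := exists_continuousLinearMap_apply_eq_of_norm_le
    (S := (star T).toLinearMap) (T := T.toLinearMap) hnorm
  have hfactor : star T = V * T := ContinuousLinearMap.ext fun x => (hV x).symm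
  exact hfactor ▸ (hI.2.2.2 V T hT).1

end OperatorIdeal

section CartanSubalgebra

variable {H : Type*} [NormedAddCommGroup H] [InnerProductSpace ℂ H] [CompleteSpace H]
  {I C : Set (H →L[ℂ] H)} {J : Submodule ℂ (H →L[ℂ] H)} {T X : H →L[ℂ] H}

lemma isCommSelfAdjointSubspace_span {s : Set (H →L[ℂ] H)} (hsJ : s ⊆ J)
    (hstar : ∀ S ∈ s, star S ∈ s) (hcomm : s.Pairwise Commute) :
    IsCommSelfAdjointSubspace J (Submodule.span ℂ s : Set (H →L[ℂ] H)) := by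
  refine ⟨Submodule.span_le.mpr hsJ, zero_mem _, fun _ _ => add_mem,
    fun c _ => Submodule.smul_mem _ c, fun S hS => ?_, fun S R hS hR => ?_⟩
  · induction hS using Submodule.span_induction with
    | mem S hS => exact Submodule.subset_span (hstar S hS)
    | zero => simp
    | add S R _ _ hS hR => exact star_add S R ▸ add_mem hS hR
    | smul c S _ hS => exact star_smul c S ▸ Submodule.smul_mem _ (star c) hS
  · rw [← commute_iff_eq]
    induction hS, hR using Submodule.span_induction₂ with
    | mem_mem S R hS hR => exact hcomm.of_refl hS hR
    | zero_left => exact Commute.zero_left _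
    | zero_right => exact Commute.zero_right _
    | add_left _ _ _ _ _ _ h h' => exact h.add_left h'
    | add_right _ _ _ _ _ _ h h' => exact h.add_right h'
    | smul_left c _ _ _ _ h => exact h.smul_left c
    | smul_right c _ _ _ _ h => exact h.smul_right c

lemma IsCommSelfAdjointSubspace.inter_ideal {D : Set (H →L[ℂ] H)}
    (hC : IsCommSelfAdjointSubspace D C) (hI : IsOperatorIdeal I) :
    IsCommSelfAdjointSubspace I (C ∩ I) := by
  obtain ⟨-, hzero, hadd, hsmul, hstar, hcomm⟩ := hC
  refine ⟨Set.inter_subset_right, ⟨hzero, hI.1⟩,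
    fun S T hS hT => ⟨hadd S T hS.1 hT.1, hI.2.1 S T hS.2 hT.2⟩,
    fun c T hT => ⟨hsmul c T hT.1, hI.2.2.1 c T hT.2⟩, fun T hT => ⟨hstar T hT.1, ?_⟩,
    fun S T hS hT => hcomm S T hS.1 hT.1⟩
  exact hI.star_mem hT.2 ⟨hcomm _ _ (hstar T hT.1) hT.1⟩

lemma IsCommSelfAdjointSubspace.realPart_mem
    (hC : IsCommSelfAdjointSubspace I C) (hT : T ∈ C) : (ℜ T : H →L[ℂ] H) ∈ C := by
  obtain ⟨-, -, hadd, hsmul, hstar, -⟩ := hC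
  have hre : (ℜ T : H →L[ℂ] H) = (2⁻¹ : ℂ) • (T + star T) := by
    rw [realPart_apply_coe, ← Complex.coe_smul, Complex.ofReal_inv, Complex.ofReal_ofNat]
  exact hre ▸ hsmul _ _ (hadd _ _ hT (hstar T hT))

lemma IsCommSelfAdjointSubspace.commute_of_forall_isSelfAdjoint
    (hC : IsCommSelfAdjointSubspace I C) (hX : ∀ A ∈ C, IsSelfAdjoint A → Commute A X)
    (hT : T ∈ C) : Commute T X := by
  have hre : ∀ S ∈ C, Commute (ℜ S : H →L[ℂ] H) X := fun S hS =>
    hX _ (hC.realPart_mem hS) (ℜ S).2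
  have him : Commute (ℑ T : H →L[ℂ] H) X := by
    have h := hre _ (hC.2.2.2.1 Complex.I T hT)
    rwa [realPart_I_smul, NegMemClass.coe_neg, Commute.neg_left_iff] at h
  rw [← realPart_add_I_smul_imaginaryPart T]
  exact (hre T hT).add_left (him.smul_left Complex.I)

lemma IsCommSelfAdjointSubspace.isCartanSubalgebra_of_forall_isStarNormal
    (hC : IsCommSelfAdjointSubspace I C)
    (hmax : ∀ X ∈ I, star X ∈ I → IsStarNormal X → (∀ S ∈ C, Commute S X) → X ∈ C) :
    IsCartanSubalgebra I C := by
  refine ⟨hC, fun C' ⟨hC'I, _, _, _, hstar, hcomm⟩ hCC' => Set.Subset.antisymm ?_ hCC'⟩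
  intro X hX
  have hX' := hstar X hX
  exact hmax X (hC'I hX) (hC'I hX') ⟨hcomm _ _ hX' hX⟩ fun S hS => hcomm S X (hCC' hS) hX

lemma IsCartanSubalgebra.mem_of_commute (hC : IsCartanSubalgebra J C) (hX : X ∈ J)
    (hX' : star X ∈ J) (hn : IsStarNormal X) (hcomm : ∀ S ∈ C, Commute S X) : X ∈ C := by
  obtain ⟨⟨hCJ, -, -, -, hCstar, hCcomm⟩, hmax⟩ := hC
  have hcomm' : ∀ S ∈ C, Commute S (star X) := fun S hS => by
    simpa only [star_star] using (hcomm (star S) (hCstar S hS)).star_star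
  let s : Set (H →L[ℂ] H) := insert X (insert (star X) C)
  have hsJ : s ⊆ J := Set.insert_subset hX (Set.insert_subset hX' hCJ)
  have hsstar : ∀ S ∈ s, star S ∈ s := by
    rintro S (rfl | rfl | hS)
    · exact .inr (.inl rfl)
    · exact .inl (star_star X)
    · exact .inr (.inr (hCstar S hS))
  have hscomm : s.Pairwise Commute := by
    have hCpair : C.Pairwise Commute := fun S hS R hR _ => hCcomm S R hS hR
    refine (hCpair.insert_of_symm fun S hS _ => (hcomm' S hS).symm).insert_of_symm ?_
    rintro S (rfl | hS) -
    · exact hn.star_comm_self.symm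
    · exact (hcomm S hS).symm
  have hCs : C ⊆ s := fun S hS => .inr (.inr hS)
  rw [← hmax _ (isCommSelfAdjointSubspace_span hsJ hsstar hscomm)
    (hCs.trans Submodule.subset_span)]
  exact Submodule.subset_span (Set.mem_insert X _)

lemma IsCartanSubalgebra.starProjection_mem (hC : IsCartanSubalgebra J C) {U : Submodule ℂ H}
    [U.HasOrthogonalProjection] (hU : ∀ S ∈ C, U ∈ invtSubmodule S.toLinearMap)
    (hUJ : U.starProjection ∈ J) : U.starProjection ∈ C := by
  have hsa : IsSelfAdjoint U.starProjection := isSelfAdjoint_starProjection U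
  refine hC.mem_of_commute hUJ (hsa.star_eq.symm ▸ hUJ) hsa.isStarNormal fun S hS => ?_
  exact (commute_starProjection_iff_mem_invtSubmodule.mpr ⟨hU S hS,
    ContinuousLinearMap.orthogonal_mem_invtSubmodule (hU _ (hC.1.2.2.2.2.1 S hS))⟩).symm

lemma IsCartanSubalgebra.starProjection_eigenspace_mem (hC : IsCartanSubalgebra J C)
    (hT : T ∈ C) {μ : ℂ} [(eigenspace T.toLinearMap μ).HasOrthogonalProjection]
    (hJ : (eigenspace T.toLinearMap μ).starProjection ∈ J) :
    (eigenspace T.toLinearMap μ).starProjection ∈ C := by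
  refine hC.starProjection_mem (fun S hS => ?_) hJ
  have hcomm : Commute T.toLinearMap S.toLinearMap :=
    congrArg ContinuousLinearMap.toLinearMap (hC.1.2.2.2.2.2 T S hT hS)
  exact mapsTo_genEigenspace_of_comm hcomm μ 1

end CartanSubalgebra

theorem cartan_inter_smaller_ideal_general
    {H : Type*} [NormedAddCommGroup H] [InnerProductSpace ℂ H] [CompleteSpace H]
    {I C : Set (H →L[ℂ] H)} {J : Submodule ℂ (H →L[ℂ] H)}
    (hI : IsOperatorIdeal I) (hIJ : I ⊆ J) (hJK : ∀ T ∈ J, IsCompactOperator T)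
    (hC : IsCartanSubalgebra J C) : IsCartanSubalgebra I (C ∩ I) := by
  refine (hC.1.inter_ideal hI).isCartanSubalgebra_of_forall_isStarNormal
    fun X hX hX' hn hcomm => ⟨?_, hX⟩
  obtain rfl | hX0 := eq_or_ne X 0
  · exact hC.1.2.1
  refine hC.mem_of_commute (hIJ hX) (hIJ hX') hn fun T hT =>
    hC.1.commute_of_forall_isSelfAdjoint (fun A hA hsa => ?_) hT
  have hAc : IsCompactOperator A := hJK A (hC.1.1 hA)
  have hreduce : ∀ μ ≠ 0, eigenspace A.toLinearMap μ ∈ invtSubmodule X.toLinearMap ∧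
      (eigenspace A.toLinearMap μ)ᗮ ∈ invtSubmodule X.toLinearMap := fun μ hμ => by
    have := ContinuousLinearMap.finite_dimensional_eigenspace hAc μ hμ
    have hPI := hI.starProjection_mem hX hX0 (eigenspace A.toLinearMap μ)
    exact commute_starProjection_iff_mem_invtSubmodule.mp
      (hcomm _ ⟨hC.starProjection_eigenspace_mem hA (hIJ hPI), hPI⟩)
  exact commute_of_forall_eigenspace_mem_invtSubmodule hAc hsa.isSymmetric
    (fun μ hμ => (hreduce μ hμ).1) fun μ hμ => (hreduce μ hμ).2

/-- Let `I ⊆ J` be operator ideals with `I ≠ {0}` and `J ⊆ K(H)`.  If `C`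
is a Cartan subalgebra of `J`, then `C ∩ I` is a Cartan subalgebra of `I`. -/
theorem cartan_inter_smaller_ideal
    {H : Type*} [NormedAddCommGroup H] [InnerProductSpace ℂ H] [CompleteSpace H]
    (b : HilbertBasis ℕ ℂ H)
    (I J : Set (H →L[ℂ] H))
    (hI : IsOperatorIdeal I) (hJ : IsOperatorIdeal J)
    (hIJ : I ⊆ J)
    (hInz : ∃ T ∈ I, T ≠ (0 : H →L[ℂ] H))
    (hJK : ∀ T ∈ J, IsCompactOperator (T : H →L[ℂ] H))
    (C : Set (H →L[ℂ] H)) (hC : IsCartanSubalgebra J C) :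
    IsCartanSubalgebra I (C ∩ I) :=
  cartan_inter_smaller_ideal_general (J := hJ.toSubmodule) hI hIJ hJK hC
end

section
/- Let T be a unitary operator on H such that TDT* is diagonal with respect to the basis b for every finite-rank operator D that is diagonal with respect to b. Then there exist a unique permutation σ of the positive integers and a unique sequence u = (u_n)_{n≥1} of complex numbers of modulus 1 such that T b_n = u_n b_{σ(n)} for every n (equivalently, T = V_{σ⁻¹}·diag u up to the labeling convention). If in addition T − 1 is compact, then σ is a finite permutation. -/
/-!
Conjugating the projection onto `bₙ` by `T` gives the rank-one operator `x ↦ ⟪T bₙ, x⟫ T bₙ`. At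
some `bₘ` not orthogonal to `T bₙ` its value is a nonzero multiple of `T bₙ`, so diagonality forces
`T bₙ` to be a multiple of `bₘ`. The vectors `T bₙ` again form an orthonormal basis, so `n ↦ m` is
injective by linear independence, and surjective because a missed `bₘ` would be orthogonal to every
`T bₙ`.

A compact operator sends an orthonormal family to a family tending to `0` in norm. If `σ n ≠ n`,
then `⟪bₙ, (T - 1) bₙ⟫ = -1`, so compactness of `T - 1` allows only finitely many such `n`.
-/

open Filter Function InnerProductSpace Topology

section

variable {𝕜 E F ι κ : Type*} [RCLike 𝕜]
  [NormedAddCommGroup E] [InnerProductSpace 𝕜 E] [NormedAddCommGroup F] [InnerProductSpace 𝕜 F]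

/-- Diagonality of an operator with respect to a family of vectors. The diagonal entries are
existentially quantified rather than recorded as a function of the index. -/
def IsDiagonalIn {R M : Type*} [Semiring R] [AddCommMonoid M] [Module R M] [TopologicalSpace M]
    (v : ι → M) (D : M →L[R] M) : Prop :=
  ∀ i, ∃ c : R, D (v i) = c • v i

theorem isDiagonalIn_rankOne_self {v : ι → E} (hv : Pairwise fun i j => inner 𝕜 (v i) (v j) = 0)
    (i : ι) : IsDiagonalIn v (rankOne 𝕜 (v i) (v i)) := by
  intro j
  rcases eq_or_ne i j with rfl | hij
  · exact ⟨_, rankOne_apply ..⟩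
  · exact ⟨0, by rw [rankOne_apply, hv hij, zero_smul, zero_smul]⟩

theorem finiteDimensional_range_rankOne (x : E) (y : F) :
    FiniteDimensional 𝕜 (LinearMap.range (rankOne 𝕜 x y : F →ₗ[𝕜] E)) :=
  Submodule.finiteDimensional_of_le (S₂ := 𝕜 ∙ x) <| by
    rintro _ ⟨z, rfl⟩
    exact Submodule.smul_mem _ _ (Submodule.mem_span_singleton_self x)

theorem mul_rankOne_mul_star [CompleteSpace E] (T : E →L[𝕜] E) (x y : E) :
    T * rankOne 𝕜 x y * star T = rankOne 𝕜 (T x) (T y) := by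
  rw [ContinuousLinearMap.mul_def, ContinuousLinearMap.mul_def, comp_rankOne, rankOne_comp,
    ContinuousLinearMap.star_eq_adjoint, ContinuousLinearMap.adjoint_adjoint]

/-- The image of a Hilbert basis under a surjective linear isometry, as a Hilbert basis. -/
noncomputable def mapHilbertBasis (b : HilbertBasis ι 𝕜 E) (e : E ≃ₗᵢ[𝕜] F) : HilbertBasis ι 𝕜 F :=
  .ofRepr (e.symm.trans b.repr)

theorem mapHilbertBasis_apply (b : HilbertBasis ι 𝕜 E) (e : E ≃ₗᵢ[𝕜] F) (i : ι) :
    mapHilbertBasis b e i = e (b i) :=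
  rfl

theorem dense_span_range_hilbertBasis (b : HilbertBasis ι 𝕜 E) :
    Dense (Submodule.span 𝕜 (Set.range b) : Set E) :=
  Submodule.dense_iff_topologicalClosure_eq_top.mpr b.dense_span

theorem exists_inner_ne_zero_of_dense_span {v : ι → E}
    (hv : Dense (Submodule.span 𝕜 (Set.range v) : Set E)) {x : E} (hx : x ≠ 0) :
    ∃ i, inner 𝕜 x (v i) ≠ 0 := by
  by_contra! h
  have h_zero : innerSL 𝕜 x = 0 :=
    ContinuousLinearMap.ext_on hv (Set.eqOn_range.mpr (funext h))
  exact hx (inner_self_eq_zero.mp (DFunLike.congr_fun h_zero x))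

theorem exists_eq_smul_of_isDiagonalIn_rankOne {v : ι → E}
    (hv : Dense (Submodule.span 𝕜 (Set.range v) : Set E)) {x y : E} (hy : y ≠ 0)
    (hD : IsDiagonalIn v (rankOne 𝕜 x y)) : ∃ (i : ι) (c : 𝕜), x = c • v i := by
  obtain ⟨i, hi⟩ := exists_inner_ne_zero_of_dense_span hv hy
  obtain ⟨c, hc⟩ := hD i
  exact ⟨i, (inner 𝕜 y (v i))⁻¹ * c, by rw [mul_smul, ← hc, rankOne_apply, inv_smul_smul₀ hi]⟩

theorem injective_of_linearIndependent_smul_comp {R M : Type*} [CommSemiring R] [Nontrivial R]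
    [AddCommMonoid M] [Module R M] {w : κ → M} {u : ι → R} {s : ι → κ}
    (h : LinearIndependent R fun i => u i • w (s i)) : Injective s := by
  have hu (i : ι) : u i ≠ 0 := fun hi => h.ne_zero i (by rw [hi, zero_smul])
  intro i j hij
  exact h.eq_of_smul_apply_eq_smul_apply (u j) (u i) i j (hu j) (by rw [hij, smul_comm])

theorem surjective_of_dense_span_smul_comp {w : κ → E} (hw : Orthonormal 𝕜 w) {u : ι → 𝕜}
    {s : ι → κ} (h : Dense (Submodule.span 𝕜 (Set.range fun i => u i • w (s i)) : Set E)) :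
    Surjective s := by
  intro k
  obtain ⟨i, hi⟩ := exists_inner_ne_zero_of_dense_span h (hw.ne_zero k)
  refine ⟨i, by_contra fun hne => hi ?_⟩
  rw [inner_smul_right, hw.inner_eq_zero (Ne.symm hne), mul_zero]

theorem eq_and_eq_of_smul_comp_eq {R M : Type*} [Semiring R] [AddCommMonoid M] [Module R M]
    {w : κ → M} (hw : LinearIndependent R w) {u u' : ι → R} {s s' : ι → κ} (hu : ∀ i, u i ≠ 0)
    (h : ∀ i, u i • w (s i) = u' i • w (s' i)) : s = s' ∧ u = u' := by
  obtain rfl : s = s' :=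
    funext fun i => hw.eq_of_smul_apply_eq_smul_apply _ _ _ _ (hu i) (h i)
  exact ⟨rfl, funext fun i => hw.smul_left_injective (s i) (h i)⟩

theorem existsUnique_equiv_unimodular_smul (b : HilbertBasis ι 𝕜 E) {w : κ → E}
    (hw : Orthonormal 𝕜 w) (hb : ∀ i, ∃ (k : κ) (c : 𝕜), b i = c • w k) :
    ∃! p : (ι ≃ κ) × (ι → 𝕜), (∀ i, ‖p.2 i‖ = 1) ∧ ∀ i, b i = p.2 i • w (p.1 i) := by
  choose s u h using hb
  have hu (i : ι) : ‖u i‖ = 1 := by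
    rw [← b.orthonormal.norm_eq_one i, h, norm_smul, hw.norm_eq_one, mul_one]
  have hs : Bijective s :=
    ⟨injective_of_linearIndependent_smul_comp (funext h ▸ b.orthonormal.linearIndependent),
      surjective_of_dense_span_smul_comp hw (funext h ▸ dense_span_range_hilbertBasis b)⟩
  refine ⟨(Equiv.ofBijective s hs, u), ⟨hu, h⟩, ?_⟩
  rintro ⟨σ, v⟩ ⟨hv, hσ⟩
  have hv_ne (i : ι) : v i ≠ 0 := norm_ne_zero_iff.mp (by rw [hv i]; exact one_ne_zero)
  obtain ⟨hσs, rfl⟩ : ⇑σ = s ∧ v = u :=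
    eq_and_eq_of_smul_comp_eq hw.linearIndependent hv_ne fun i => (hσ i).symm.trans (h i)
  exact Prod.ext (Equiv.ext (congrFun hσs)) rfl

theorem tendsto_dual_apply_cofinite [CompleteSpace E] {v : ι → E} (hv : Orthonormal 𝕜 v)
    (f : E →L[𝕜] 𝕜) : Tendsto (fun i => f (v i)) cofinite (𝓝 0) := by
  have h_bessel : Tendsto (fun i => ‖f (v i)‖ ^ 2) cofinite (𝓝 0) := by
    have h_summable := hv.inner_products_summable ((toDual 𝕜 E).symm f)
    refine h_summable.tendsto_cofinite_zero.congr fun i => ?_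
    rw [norm_inner_symm, toDual_symm_apply]
  rw [tendsto_zero_iff_norm_tendsto_zero]
  simpa using h_bessel.sqrt

theorem tendsto_apply_cofinite_of_isCompactOperator [CompleteSpace E] {G : Type*}
    [NormedAddCommGroup G] [NormedSpace 𝕜 G] {K : E →L[𝕜] G} (hK : IsCompactOperator K)
    {v : ι → E} (hv : Orthonormal 𝕜 v) : Tendsto (fun i => K (v i)) cofinite (𝓝 0) := by
  have h_compact : IsCompact (closure (K '' Metric.closedBall 0 1)) :=
    hK.isCompact_closure_image_closedBall (f := (K : E →ₗ[𝕜] G)) 1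
  refine h_compact.tendsto_nhds_of_unique_mapClusterPt (.of_forall fun i => subset_closure
    ⟨v i, by simp [hv.norm_eq_one], rfl⟩) fun y _ hy => ?_
  refine SeparatingDual.eq_zero_of_forall_dual_eq_zero (R := 𝕜) fun f => ?_
  have h_cluster : ClusterPt (f y) (𝓝 0) :=
    (hy.continuousAt_comp f.continuous.continuousAt).clusterPt.mono
      (tendsto_dual_apply_cofinite hv (f ∘L K))
  exact eq_of_nhds_neBot h_cluster

theorem finite_setOf_ne_of_isCompactOperator_sub_one [CompleteSpace E] {T : E →L[𝕜] E}
    (hT : IsCompactOperator (T - 1 : E →L[𝕜] E)) {v : ι → E} (hv : Orthonormal 𝕜 v)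
    {u : ι → 𝕜} {s : ι → ι} (h : ∀ i, T (v i) = u i • v (s i)) : {i | s i ≠ i}.Finite := by
  have h_norm (i : ι) (hi : s i ≠ i) : 1 ≤ ‖(T - 1) (v i)‖ := by
    have h_inner : inner 𝕜 (v i) ((T - 1) (v i)) = -1 := by
      rw [sub_apply, one_apply_eq_self, inner_sub_right, h, inner_smul_right,
        hv.inner_eq_zero hi.symm, inner_self_eq_norm_sq_to_K, hv.norm_eq_one]
      simp
    calc 1 = ‖inner 𝕜 (v i) ((T - 1) (v i))‖ := by rw [h_inner, norm_neg, norm_one]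
      _ ≤ ‖v i‖ * ‖(T - 1) (v i)‖ := norm_inner_le_norm _ _
      _ = ‖(T - 1) (v i)‖ := by rw [hv.norm_eq_one, one_mul]
  have h_lt : ∀ᶠ i in cofinite, ‖(T - 1) (v i)‖ < 1 :=
    (tendsto_apply_cofinite_of_isCompactOperator hT hv).norm.eventually_lt_const (by simp)
  exact h_lt.mono fun i hi => by_contra fun hne => hi.not_ge (h_norm i hne)

theorem normalizer_of_diagonal_is_permutation_times_diagonal_general [CompleteSpace E]
    (b : HilbertBasis ι 𝕜 E) (T : E →L[𝕜] E) (hT : T ∈ unitary (E →L[𝕜] E))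
    (hdiag : ∀ i, IsDiagonalIn b (T * rankOne 𝕜 (b i) (b i) * star T)) :
    (∃! p : Equiv.Perm ι × (ι → 𝕜),
      (∀ i, ‖p.2 i‖ = 1) ∧ ∀ i, T (b i) = p.2 i • b (p.1 i)) ∧
    (∀ (s : ι → ι) (u : ι → 𝕜), (∀ i, T (b i) = u i • b (s i)) →
      IsCompactOperator (T - 1 : E →L[𝕜] E) → {i | s i ≠ i}.Finite) := by
  refine ⟨?_, fun s u h hK => finite_setOf_ne_of_isCompactOperator_sub_one hK b.orthonormal h⟩
  let Tb : HilbertBasis ι 𝕜 E := mapHilbertBasis b (Unitary.linearIsometryEquiv ⟨T, hT⟩)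
  have hTb (i : ι) : Tb i = T (b i) := mapHilbertBasis_apply ..
  simp only [← hTb]
  refine existsUnique_equiv_unimodular_smul Tb b.orthonormal fun i => ?_
  refine exists_eq_smul_of_isDiagonalIn_rankOne (dense_span_range_hilbertBasis b)
    (Tb.orthonormal.ne_zero i) ?_
  rw [hTb, ← mul_rankOne_mul_star]
  exact hdiag i

end

/-- Let `T` be a unitary operator on `H` such that `T D T*` is diagonal
(w.r.t. the basis `b`) for every finite-rank operator `D` diagonal w.r.t. `b`.  Then there
exist a unique permutation `σ` of `ℕ` and a unique sequence `u` of unimodular complex numbers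
such that `T bₙ = uₙ • b_{σ(n)}` for all `n`.  If moreover `T - 1` is compact, then `σ` is a
finite permutation. -/
theorem normalizer_of_diagonal_is_permutation_times_diagonal
    {H : Type*} [NormedAddCommGroup H] [InnerProductSpace ℂ H] [CompleteSpace H]
    (b : HilbertBasis ℕ ℂ H)
    (T : H →L[ℂ] H) (hT : T ∈ unitary (H →L[ℂ] H))
    (hdiag : ∀ D : H →L[ℂ] H,
      FiniteDimensional ℂ (LinearMap.range (D : H →ₗ[ℂ] H)) →
      (∀ n : ℕ, ∃ c : ℂ, D (b n) = c • b n) →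
      ∀ n : ℕ, ∃ c : ℂ, (T * D * star T) (b n) = c • b n) :
    (∃! p : Equiv.Perm ℕ × (ℕ → ℂ),
      (∀ n : ℕ, ‖p.2 n‖ = 1) ∧ ∀ n : ℕ, T (b n) = p.2 n • b (p.1 n)) ∧
    (∀ (σ : Equiv.Perm ℕ) (u : ℕ → ℂ),
      (∀ n : ℕ, ‖u n‖ = 1) → (∀ n : ℕ, T (b n) = u n • b (σ n)) →
      IsCompactOperator ((T - 1 : H →L[ℂ] H) : H → H) →
      {n : ℕ | σ n ≠ n}.Finite) := by
  obtain ⟨h_unique, h_finite⟩ :=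
    normalizer_of_diagonal_is_permutation_times_diagonal_general b T hT fun n =>
      hdiag _ (finiteDimensional_range_rankOne _ _)
        (isDiagonalIn_rankOne_self b.orthonormal.2 n)
  exact ⟨h_unique, fun σ u _ => h_finite σ u⟩
end
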